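/- arXiv:1404.2873 — 2 statements merged into one kernel-verified Lean document; each statement's English description precedes it below -/
import Mathlib

section
/- Let G be a finite abelian group with |G| > 2, exp(G) = n, and r(G) < n − 1, and let G₀ ⊆ G be a minimal non-half-factorial set with min Δ(G₀) = max Δ*(G). Then there exists g ∈ G with ord(g) = n such that G₀ = {g, −g}. -/
open Multiset

section Defs

variable {G : Type*} [AddCommGroup G]

/-- `S` is a zero-sum sequence over `G₀`: a multiset with entries in `G₀` and sum `0`. -/
def IsZeroSumSeq (G₀ : Set G) (S : Multiset G) : Prop :=
  (∀ x ∈ S, x ∈ G₀) ∧ S.sum = 0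

/-- `S` is an atom over `G₀`: a nonempty zero-sum sequence over `G₀` that is not the
union of two nonempty zero-sum sequences over `G₀`. -/
def IsAtomSeq (G₀ : Set G) (S : Multiset G) : Prop :=
  IsZeroSumSeq G₀ S ∧ S ≠ 0 ∧
    ∀ A B : Multiset G, IsZeroSumSeq G₀ A → IsZeroSumSeq G₀ B →
      A ≠ 0 → B ≠ 0 → S ≠ A + B

/-- The set of lengths of `B`: all `k` such that `B` is a union of `k` atoms over `G₀`. -/
def LengthSet (G₀ : Set G) (B : Multiset G) : Set ℕ :=
  {k | ∃ l : Multiset (Multiset G), Multiset.card l = k ∧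
      (∀ A ∈ l, IsAtomSeq G₀ A) ∧ l.sum = B}

/-- The set of successive distances of a set of naturals. -/
def DeltaOf (L : Set ℕ) : Set ℕ :=
  {d | ∃ x ∈ L, ∃ y ∈ L, x < y ∧ y - x = d ∧ ∀ z ∈ L, ¬(x < z ∧ z < y)}

/-- The set of distances `Δ(G₀)`. -/
def DeltaSet (G₀ : Set G) : Set ℕ :=
  {d | ∃ B : Multiset G, IsZeroSumSeq G₀ B ∧ B ≠ 0 ∧ d ∈ DeltaOf (LengthSet G₀ B)}

/-- `G₀` is half-factorial if `Δ(G₀) = ∅`. -/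
def IsHalfFactorialSet (G₀ : Set G) : Prop := DeltaSet G₀ = ∅

/-- `G₀` is minimal non-half-factorial if `Δ(G₀) ≠ ∅` and every proper subset is
half-factorial. -/
def IsMinNonHalfFactorial (G₀ : Set G) : Prop :=
  (DeltaSet G₀).Nonempty ∧ ∀ G₁ : Set G, G₁ ⊂ G₀ → DeltaSet G₁ = ∅

/-- The cross number `k(S) = Σ 1/ord(g)` of a multiset over `G`. -/
noncomputable def crossNumber (S : Multiset G) : ℚ :=
  (S.map (fun g => ((addOrderOf g : ℚ))⁻¹)).sum

/-- `G₀` is an LCN-set if every atom over `G₀` has cross number at least 1. -/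
def IsLCNSet (G₀ : Set G) : Prop :=
  ∀ U : Multiset G, IsAtomSeq G₀ U → 1 ≤ crossNumber U

/-- A subset of `G \ {0}` is independent if any integral linear relation on its elements
has all summands zero. -/
def IsIndependentSet (E : Set G) : Prop :=
  (0 : G) ∉ E ∧ ∀ s : Finset G, ↑s ⊆ E → ∀ f : G → ℤ,
    (∑ e ∈ s, f e • e) = 0 → ∀ e ∈ s, f e • e = 0

/-- `d` is a greatest common divisor of the set `S` of naturals. -/
def IsSetGcd (S : Set ℕ) (d : ℕ) : Prop :=
  (∀ s ∈ S, d ∣ s) ∧ ∀ e : ℕ, (∀ s ∈ S, e ∣ s) → e ∣ d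

end Defs

/-- The set of minimal distances `Δ*(G)`. -/
def DeltaStar (G : Type*) [AddCommGroup G] : Set ℕ :=
  {d | ∃ G₀ : Set G, (DeltaSet G₀).Nonempty ∧ d = sInf (DeltaSet G₀)}

/-- The `p`-rank of a finite abelian group: `log_p` of the order of the `p`-torsion
subgroup `{x | p • x = 0}`. -/
noncomputable def pRank (G : Type*) [AddCommGroup G] (p : ℕ) : ℕ :=
  Nat.log p (Nat.card {x : G // p • x = 0})

/-- The rank of a finite abelian group: the maximum of the `p`-ranks over all primes. -/
noncomputable def rankG (G : Type*) [AddCommGroup G] : ℕ :=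
  sSup {r : ℕ | ∃ p : ℕ, p.Prime ∧ r = pRank G p}


section Helpers

variable {G : Type*} [AddCommGroup G]

lemma IsZeroSumSeq.add' {G₀ : Set G} {A B : Multiset G} (hA : IsZeroSumSeq G₀ A)
    (hB : IsZeroSumSeq G₀ B) : IsZeroSumSeq G₀ (A + B) := by
  refine ⟨fun x hx => ?_, by rw [Multiset.sum_add, hA.2, hB.2, add_zero]⟩
  rcases Multiset.mem_add.1 hx with h | h
  · exact hA.1 x h
  · exact hB.1 x h

lemma IsZeroSumSeq.right {G₀ : Set G} {A B : Multiset G} (hA : IsZeroSumSeq G₀ A)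
    (hB : IsZeroSumSeq G₀ (A + B)) : IsZeroSumSeq G₀ B := by
  refine ⟨fun x hx => hB.1 x (Multiset.mem_add.2 (Or.inr hx)), ?_⟩
  have := hB.2
  rwa [Multiset.sum_add, hA.2, zero_add] at this

lemma zs_zero (G₀ : Set G) : IsZeroSumSeq G₀ (0 : Multiset G) := ⟨by simp, by simp⟩

lemma zs_sum {G₀ : Set G} (l : Multiset (Multiset G)) (h : ∀ A ∈ l, IsZeroSumSeq G₀ A) :
    IsZeroSumSeq G₀ l.sum := by
  induction l using Multiset.induction with
  | empty => simpa using zs_zero G₀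
  | cons a s ih =>
    rw [Multiset.sum_cons]
    exact (h a (by simp)).add' (ih fun A hA => h A (by simp [hA]))

/-- an atom does not properly contain a nonempty zero-sum sequence -/
lemma IsAtomSeq.eq_of_le {G₀ : Set G} {U A : Multiset G} (hU : IsAtomSeq G₀ U)
    (hA : A.sum = 0) (hA0 : A ≠ 0) (hle : A ≤ U) : A = U := by
  obtain ⟨B, rfl⟩ := Multiset.le_iff_exists_add.1 hle
  have hA' : IsZeroSumSeq G₀ A :=
    ⟨fun x hx => hU.1.1 x (Multiset.mem_add.2 (Or.inl hx)), hA⟩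
  by_contra hne
  have hB0 : B ≠ 0 := by rintro rfl; simp at hne
  exact hU.2.2 A B hA' (hA'.right hU.1) hA0 hB0 rfl

lemma IsAtomSeq.change {G₀ G₁ : Set G} {U : Multiset G} (hU : IsAtomSeq G₀ U)
    (h : ∀ x ∈ U, x ∈ G₁) : IsAtomSeq G₁ U := by
  refine ⟨⟨h, hU.1.2⟩, hU.2.1, fun A B hA hB hA0 hB0 hAB => ?_⟩
  have := hU.eq_of_le hA.2 hA0 (by rw [hAB]; exact Multiset.le_add_right _ _)
  rw [← this] at hAB
  exact hB0 (by simpa using hAB)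

lemma exists_factor {G₀ : Set G} : ∀ (N : ℕ) (B : Multiset G), Multiset.card B ≤ N →
    IsZeroSumSeq G₀ B → ∃ l : Multiset (Multiset G), (∀ A ∈ l, IsAtomSeq G₀ A) ∧ l.sum = B := by
  intro N
  induction N with
  | zero =>
    intro B hB _
    exact ⟨0, by simp, by simpa using (Multiset.card_eq_zero.1 (by omega)).symm⟩
  | succ N ih =>
    intro B hB hz
    by_cases h0 : B = 0
    · exact ⟨0, by simp, by simp [h0]⟩
    by_cases hat : IsAtomSeq G₀ B
    · exact ⟨{B}, by simpa using hat, by simp⟩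
    have : ∃ A C, IsZeroSumSeq G₀ A ∧ IsZeroSumSeq G₀ C ∧ A ≠ 0 ∧ C ≠ 0 ∧ B = A + C := by
      by_contra hcon
      exact hat ⟨hz, h0, fun A C hA hC hA0 hC0 he => hcon ⟨A, C, hA, hC, hA0, hC0, he⟩⟩
    obtain ⟨A, C, hA, hC, hA0, hC0, rfl⟩ := this
    have h1 := Multiset.card_pos.2 hA0
    have h2 := Multiset.card_pos.2 hC0
    rw [Multiset.card_add] at hB
    obtain ⟨l1, h11, h12⟩ := ih A (by omega) hA
    obtain ⟨l2, h21, h22⟩ := ih C (by omega) hC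
    refine ⟨l1 + l2, fun D hD => ?_, by rw [Multiset.sum_add, h12, h22]⟩
    rcases Multiset.mem_add.1 hD with h | h
    · exact h11 D h
    · exact h21 D h

lemma exists_delta {G₀ : Set G} {B : Multiset G} (hz : IsZeroSumSeq G₀ B) (h0 : B ≠ 0)
    {a b : ℕ} (ha : a ∈ LengthSet G₀ B) (hb : b ∈ LengthSet G₀ B) (hab : a < b) :
    ∃ d ∈ DeltaSet G₀, d ≤ b - a := by
  classical
  have hex : ∃ z, z ∈ LengthSet G₀ B ∧ a < z := ⟨b, hb, hab⟩
  refine ⟨Nat.find hex - a, ⟨B, hz, h0, a, ha, Nat.find hex, (Nat.find_spec hex).1,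
    (Nat.find_spec hex).2, rfl, ?_⟩, ?_⟩
  · intro z hzL ⟨h1, h2⟩
    exact Nat.find_min hex h2 ⟨hzL, h1⟩
  · have := Nat.find_min' hex ⟨hb, hab⟩
    omega

/-- two factorizations of different lengths differ by at least the minimal distance -/
lemma delta_le {G₀ : Set G} (l l' : Multiset (Multiset G)) (hl : ∀ A ∈ l, IsAtomSeq G₀ A)
    (hl' : ∀ A ∈ l', IsAtomSeq G₀ A) (hs : l.sum = l'.sum)
    (hlt : Multiset.card l < Multiset.card l') :
    (DeltaSet G₀).Nonempty ∧ sInf (DeltaSet G₀) ≤ Multiset.card l' - Multiset.card l := by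
  have hz : IsZeroSumSeq G₀ l'.sum := zs_sum l' fun A hA => (hl' A hA).1
  have h0 : l'.sum ≠ 0 := by
    intro h
    obtain ⟨A, hA⟩ := Multiset.card_pos_iff_exists_mem.1 (lt_of_le_of_lt (Nat.zero_le _) hlt)
    have : A ≤ l'.sum := Multiset.single_le_sum (fun x _ => Multiset.zero_le x) A hA
    rw [h] at this
    exact (hl' A hA).2.1 (Multiset.le_zero.1 this)
  obtain ⟨d, hd, hle⟩ := exists_delta hz h0 ⟨l, rfl, hl, hs⟩ ⟨l', rfl, hl', rfl⟩ hlt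
  exact ⟨⟨d, hd⟩, (Nat.sInf_le hd).trans hle⟩

lemma cn_add (A B : Multiset G) : crossNumber (A + B) = crossNumber A + crossNumber B := by
  simp [crossNumber]

lemma cn_zero : crossNumber (0 : Multiset G) = 0 := by simp [crossNumber]

lemma cn_nonneg (A : Multiset G) : 0 ≤ crossNumber A := by
  apply Multiset.sum_nonneg
  intro x hx
  obtain ⟨g, _, rfl⟩ := Multiset.mem_map.1 hx
  positivity

lemma cn_sum (l : Multiset (Multiset G)) :
    crossNumber l.sum = (l.map crossNumber).sum := by
  induction l using Multiset.induction with
  | empty => simp [cn_zero]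
  | cons a s ih => simp [cn_add, ih]

lemma cn_sum_good (l : Multiset (Multiset G)) (h : ∀ A ∈ l, crossNumber A = 1) :
    crossNumber l.sum = Multiset.card l := by
  induction l using Multiset.induction with
  | empty => simp [cn_zero]
  | cons a s ih =>
    rw [Multiset.sum_cons, cn_add, ih fun A hA => h A (by simp [hA]), h a (by simp)]
    simp [add_comm]

lemma cn_sum_ge (l : Multiset (Multiset G)) (h : ∀ A ∈ l, 1 ≤ crossNumber A) :
    (Multiset.card l : ℚ) ≤ crossNumber l.sum := by
  induction l using Multiset.induction with
  | empty => simp [cn_zero]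
  | cons a s ih =>
    rw [Multiset.sum_cons, cn_add]
    have h1 := ih fun A hA => h A (by simp [hA])
    have h2 := h a (by simp)
    simp only [Multiset.card_cons, Nat.cast_add, Nat.cast_one]
    linarith

lemma cn_replicate (k : ℕ) (g : G) :
    crossNumber (Multiset.replicate k g) = k * (addOrderOf g : ℚ)⁻¹ := by
  simp [crossNumber]

variable [Finite G]

lemma cn_replicate_order (g : G) :
    crossNumber (Multiset.replicate (addOrderOf g) g) = 1 := by
  rw [cn_replicate]
  have : (addOrderOf g : ℚ) ≠ 0 := by exact_mod_cast (addOrderOf_pos g).ne'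
  field_simp

lemma atom_replicate {G₀ : Set G} {g : G} (hg : g ∈ G₀) :
    IsAtomSeq G₀ (Multiset.replicate (addOrderOf g) g) := by
  refine ⟨⟨fun x hx => (Multiset.eq_of_mem_replicate hx) ▸ hg, by simp⟩, ?_, ?_⟩
  · intro h
    have := congrArg Multiset.card h
    have h2 := addOrderOf_pos g
    rw [Multiset.card_replicate, Multiset.card_zero] at this
    omega
  · intro A B hA hB hA0 hB0 hAB
    have hAr : A = Multiset.replicate (Multiset.card A) g := by
      rw [Multiset.eq_replicate_card]
      intro b hb
      exact Multiset.eq_of_mem_replicate (n := addOrderOf g) (by rw [hAB]; simp [hb])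
    have h1 := hA.2
    rw [hAr, Multiset.sum_replicate] at h1
    have h2 := Nat.le_of_dvd (Multiset.card_pos.2 hA0) (addOrderOf_dvd_of_nsmul_eq_zero h1)
    have h3 := congrArg Multiset.card hAB
    have h4 := Multiset.card_pos.2 hB0
    simp at h3
    omega

/-- `U^n` as a product of atoms of the form `g^{ord g}` -/
lemma power_factor {G₀ : Set G} (n : ℕ) (hn : ∀ g : G, addOrderOf g ∣ n) (U : Multiset G)
    (hU : ∀ x ∈ U, x ∈ G₀) : ∃ l : Multiset (Multiset G), (∀ A ∈ l, IsAtomSeq G₀ A) ∧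
      l.sum = n • U ∧ (Multiset.card l : ℚ) = n * crossNumber U := by
  induction U using Multiset.induction with
  | empty => exact ⟨0, by simp, by simp, by simp [cn_zero]⟩
  | cons a s ih =>
    obtain ⟨l, h1, h2, h3⟩ := ih fun x hx => hU x (by simp [hx])
    refine ⟨Multiset.replicate (n / addOrderOf a) (Multiset.replicate (addOrderOf a) a) + l,
      ?_, ?_, ?_⟩
    · intro A hA
      rcases Multiset.mem_add.1 hA with h | h
      · rw [Multiset.eq_of_mem_replicate h]
        exact atom_replicate (hU a (by simp))
      · exact h1 A h
    · rw [Multiset.sum_add, h2, Multiset.sum_replicate, Multiset.nsmul_replicate,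
        Nat.div_mul_cancel (hn a), ← Multiset.singleton_add, nsmul_add, Multiset.nsmul_singleton]
    · rw [← Multiset.singleton_add, cn_add, Multiset.card_add, Nat.cast_add, h3,
        Multiset.card_replicate, Nat.cast_div (hn a)
          (by exact_mod_cast (addOrderOf_pos a).ne')]
      simp [crossNumber, div_eq_mul_inv, mul_add]

/-- atoms over a half-factorial set have cross number one -/
lemma cn_eq_one_of_hf {G₀ : Set G} (h : DeltaSet G₀ = ∅) {U : Multiset G}
    (hU : IsAtomSeq G₀ U) : crossNumber U = 1 := by
  have hn : ∀ g : G, addOrderOf g ∣ AddMonoid.exponent G :=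
    fun g => AddMonoid.addOrder_dvd_exponent g
  have hpos : 0 < AddMonoid.exponent G :=
    Nat.pos_of_ne_zero (AddMonoid.exponent_ne_zero_of_finite)
  obtain ⟨l, h1, h2, h3⟩ := power_factor (G₀ := G₀) _ hn U hU.1.1
  set n := AddMonoid.exponent G
  have hrep : ∀ A ∈ Multiset.replicate n U, IsAtomSeq G₀ A :=
    fun A hA => (Multiset.eq_of_mem_replicate hA) ▸ hU
  have hcard : Multiset.card l = n := by
    rcases lt_trichotomy (Multiset.card l) n with hlt | heq | hgt
    · have := (delta_le l (Multiset.replicate n U) h1 hrep (by simp [h2]) (by simpa using hlt)).1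
      simp [h] at this
    · exact heq
    · have := (delta_le (Multiset.replicate n U) l hrep h1 (by simp [h2]) (by simpa using hgt)).1
      simp [h] at this
  rw [hcard] at h3
  have : (n : ℚ) ≠ 0 := by exact_mod_cast hpos.ne'
  have h4 : (n : ℚ) * (crossNumber U - 1) = 0 := by linarith
  rcases mul_eq_zero.1 h4 with h5 | h5
  · exact absurd h5 this
  · linarith

end Helpers

section RankPart

lemma pow_card_le_of_li {V : Type*} [AddCommGroup V] [Finite V] (p : ℕ) [hp : Fact p.Prime]
    [Module (ZMod p) V] {κ : Type*} [Fintype κ] {w : κ → V} (hli : LinearIndependent (ZMod p) w) :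
    p ^ Fintype.card κ ≤ Nat.card V := by
  have h1 : Fintype.card κ ≤ Module.finrank (ZMod p) V := hli.fintype_card_le_finrank
  have h2 : Nat.card V = p ^ Module.finrank (ZMod p) V := by
    rw [Module.natCard_eq_pow_finrank (K := ZMod p) (V := V), Nat.card_zmod]
  rw [h2]
  exact Nat.pow_le_pow_right hp.out.pos h1

lemma exists_small_gen_aux {H V : Type*} [AddCommGroup H] [AddCommGroup V] [Finite V]
    {ι : Type*} (v : ι → H)
    (hv : AddSubgroup.closure (Set.range v) = ⊤) (p : ℕ) [hp : Fact p.Prime] [Module (ZMod p) V]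
    (mk : H →+ V) :
    ∃ E : Finset ι, p ^ E.card ≤ Nat.card V ∧
      ∀ x : H, ∃ z ∈ AddSubgroup.closure (v '' (E : Set ι)), mk z = mk x := by
  classical
  obtain ⟨κ, a, ha, hspan, hli⟩ := exists_linearIndependent' (ZMod p) (mk ∘ v)
  have hinj : Function.Injective ((mk ∘ v) ∘ a) := hli.injective
  haveI : Finite κ := Finite.of_injective _ hinj
  haveI := Fintype.ofFinite κ
  refine ⟨Finset.univ.image a, ?_, ?_⟩
  · rw [Finset.card_image_of_injective _ ha, Finset.card_univ]
    exact pow_card_le_of_li p hli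
  · set C := AddSubgroup.closure (v '' ((Finset.univ.image a : Finset ι) : Set ι)) with hC
    have hmk : ∀ y : V, y ∈ Submodule.span (ZMod p) (Set.range ((mk ∘ v) ∘ a)) →
        ∃ z ∈ C, mk z = y := by
      intro y hy
      induction hy using Submodule.span_induction with
      | mem x hx =>
        obtain ⟨k, rfl⟩ := hx
        exact ⟨v (a k), AddSubgroup.subset_closure ⟨a k, by simp, rfl⟩, rfl⟩
      | zero => exact ⟨0, C.zero_mem, _root_.map_zero _⟩
      | add x y _ _ hx hy =>
        obtain ⟨z, hz, rfl⟩ := hx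
        obtain ⟨w, hw, rfl⟩ := hy
        exact ⟨z + w, C.add_mem hz hw, _root_.map_add _ _ _⟩
      | smul c x _ hx =>
        obtain ⟨z, hz, rfl⟩ := hx
        refine ⟨c.val • z, C.nsmul_mem hz _, ?_⟩
        rw [_root_.map_nsmul]
        conv_rhs => rw [← ZMod.natCast_zmod_val c]
        rw [Nat.cast_smul_eq_nsmul]
    have hall : ∀ x : H, mk x ∈ Submodule.span (ZMod p) (Set.range (mk ∘ v)) := by
      intro x
      have hx : x ∈ AddSubgroup.closure (Set.range v) := by rw [hv]; trivial
      induction hx using AddSubgroup.closure_induction with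
      | mem x hx =>
        obtain ⟨i, rfl⟩ := hx
        exact Submodule.subset_span (Set.mem_range_self (f := mk ∘ v) i)
      | zero => rw [_root_.map_zero]; exact Submodule.zero_mem _
      | add x y _ _ hx hy => rw [_root_.map_add]; exact Submodule.add_mem _ hx hy
      | neg x _ hx => rw [_root_.map_neg]; exact Submodule.neg_mem _ hx
    intro x
    exact hmk (mk x) (hspan ▸ hall x)

lemma exists_small_gen {H : Type*} [AddCommGroup H] [Finite H] {ι : Type*} (v : ι → H)
    (hv : AddSubgroup.closure (Set.range v) = ⊤) (p : ℕ) [hp : Fact p.Prime] :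
    ∃ E : Finset ι, p ^ E.card ≤ Nat.card {x : H // p • x = 0} ∧
      ∃ t : ℕ, ¬ p ∣ t ∧ ∀ x : H, t • x ∈ AddSubgroup.closure (v '' (E : Set ι)) := by
  classical
  let P : H →+ H := nsmulAddMonoidHom p
  let V := H ⧸ P.range
  have hpV : ∀ x : V, p • x = 0 := by
    intro x
    induction x using QuotientAddGroup.induction_on with
    | H z =>
      rw [← QuotientAddGroup.mk_nsmul, QuotientAddGroup.eq_zero_iff]
      exact ⟨z, rfl⟩
  letI : Module (ZMod p) V := AddCommGroup.zmodModule hpV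
  haveI : Finite V := inferInstanceAs (Finite (H ⧸ P.range))
  obtain ⟨E, h2, hE⟩ := exists_small_gen_aux (V := V) v hv p (QuotientAddGroup.mk' P.range)
  refine ⟨E, ?_, ?_⟩
  · have h3 : Nat.card V = Nat.card P.ker := by
      have e1 : Nat.card H = Nat.card V * Nat.card P.range :=
        AddSubgroup.card_eq_card_quotient_mul_card_addSubgroup _
      have e2 : Nat.card H = Nat.card (H ⧸ P.ker) * Nat.card P.ker :=
        AddSubgroup.card_eq_card_quotient_mul_card_addSubgroup _
      have e3 : Nat.card (H ⧸ P.ker) = Nat.card P.range :=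
        Nat.card_congr (QuotientAddGroup.quotientKerEquivRange P).toEquiv
      have e4 : 0 < Nat.card P.range := Nat.card_pos
      rw [e3, mul_comm] at e2
      exact Nat.eq_of_mul_eq_mul_right e4 (e1.symm.trans e2)
    have h4 : Nat.card P.ker = Nat.card {x : H // p • x = 0} := rfl
    rw [← h4, ← h3]
    exact h2
  · set C := AddSubgroup.closure (v '' (E : Set ι)) with hC
    have hdec : ∀ x : H, ∃ z ∈ C, ∃ w, x = z + p • w := by
      intro x
      obtain ⟨z, hz, hzx⟩ := hE x
      obtain ⟨w, hw⟩ : -z + x ∈ P.range := QuotientAddGroup.eq.1 hzx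
      refine ⟨z, hz, w, ?_⟩
      have : p • w = -z + x := hw
      rw [this]; abel
    refine ⟨Nat.card (H ⧸ C), ?_, ?_⟩
    · intro hdvd
      have hsurj : Function.Surjective (fun y : H ⧸ C => p • y) := by
        intro y
        induction y using QuotientAddGroup.induction_on with
        | H x =>
          obtain ⟨z, hz, w, rfl⟩ := hdec x
          refine ⟨(w : H ⧸ C), ?_⟩
          show p • (w : H ⧸ C) = _
          rw [← QuotientAddGroup.mk_nsmul, QuotientAddGroup.eq]
          have : -(p • w) + (z + p • w) = z := by abel
          rwa [this]
      have hinj2 := Finite.injective_iff_surjective.2 hsurj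
      obtain ⟨y, hy⟩ := exists_prime_addOrderOf_dvd_card' (G := H ⧸ C) p hdvd
      have h1 : p • y = 0 := hy ▸ addOrderOf_nsmul_eq_zero y
      have h2 : y = 0 := hinj2 (by simpa using h1)
      rw [h2, addOrderOf_zero] at hy
      exact hp.out.one_lt.ne hy
    · intro x
      rw [← QuotientAddGroup.eq_zero_iff, QuotientAddGroup.mk_nsmul]
      exact card_nsmul_eq_zero'

lemma pRank_le_rankG (G : Type*) [AddCommGroup G] [Finite G] (p : ℕ) (hp : p.Prime) :
    pRank G p ≤ rankG G := by
  refine le_csSup ⟨Nat.card G, ?_⟩ ⟨p, hp, rfl⟩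
  rintro r ⟨q, _, rfl⟩
  exact (Nat.log_le_self _ _).trans (Nat.card_le_card_of_injective _ Subtype.val_injective)

/-- for every prime `p` there are at most `rankG G` elements of `G₀` generating a
subgroup of `⟨G₀⟩` of index prime to `p` -/
lemma exists_small_sub {G : Type*} [AddCommGroup G] [Finite G] (G₀ : Set G) (p : ℕ)
    (hp : p.Prime) : ∃ E : Finset G, (E : Set G) ⊆ G₀ ∧ E.card ≤ rankG G ∧
      ∃ t : ℕ, ¬ p ∣ t ∧ ∀ x ∈ G₀, t • x ∈ AddSubgroup.closure (E : Set G) := by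
  classical
  haveI : Fact p.Prime := ⟨hp⟩
  let H := AddSubgroup.closure G₀
  let v : G₀ → H := fun x => ⟨x, AddSubgroup.subset_closure x.2⟩
  have hrange : Set.range v = (Subtype.val : H → G) ⁻¹' G₀ := by
    ext x
    constructor
    · rintro ⟨y, rfl⟩; exact y.2
    · intro hx; exact ⟨⟨x, hx⟩, rfl⟩
  have hv : AddSubgroup.closure (Set.range v) = ⊤ := by
    rw [hrange]
    exact AddSubgroup.closure_closure_coe_preimage
  obtain ⟨E, hE, t, ht, hx⟩ := exists_small_gen v hv p
  refine ⟨E.image Subtype.val, ?_, ?_, t, ht, ?_⟩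
  · intro x hx
    simp only [Finset.coe_image, Set.mem_image] at hx
    obtain ⟨y, _, rfl⟩ := hx
    exact y.2
  · rw [Finset.card_image_of_injective _ Subtype.val_injective]
    refine le_trans ?_ (pRank_le_rankG G p hp)
    refine Nat.le_log_of_pow_le hp.one_lt (hE.trans ?_)
    refine Nat.card_le_card_of_injective
      (fun x : {x : H // p • x = 0} => (⟨x.1.1, by
        have := congrArg Subtype.val x.2
        simpa using this⟩ : {x : G // p • x = 0})) ?_
    intro x y hxy
    have := congrArg Subtype.val hxy
    exact Subtype.ext (Subtype.ext this)
  · intro x hx0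
    have h1 := hx (v ⟨x, hx0⟩)
    have h2 := AddSubgroup.mem_map_of_mem H.subtype h1
    rw [AddMonoidHom.map_closure] at h2
    have h3 : H.subtype '' (v '' (E : Set G₀)) = ((E.image Subtype.val : Finset G) : Set G) := by
      ext y
      simp only [Set.mem_image, Finset.coe_image, v]
      constructor
      · rintro ⟨z, ⟨w, hw, rfl⟩, rfl⟩
        exact ⟨w, hw, rfl⟩
      · rintro ⟨w, hw, rfl⟩
        exact ⟨_, ⟨w, hw, rfl⟩, rfl⟩
    rw [h3] at h2
    simpa [v] using h2

end RankPart

section PairPart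

variable {G : Type*} [AddCommGroup G] [Finite G]

lemma pair_atom {g : G} {A : Multiset G}
    (hA : IsAtomSeq ({g, -g} : Set G) A) (hne : g ≠ -g) :
    A = {g, -g} ∨ A = Multiset.replicate (addOrderOf g) g ∨
      A = Multiset.replicate (addOrderOf g) (-g) := by
  classical
  have key : ∀ h : G, addOrderOf h = addOrderOf g → (∀ x ∈ A, x = h) →
      A = Multiset.replicate (addOrderOf g) h := by
    intro h ho hx
    have h1 : A = Multiset.replicate (Multiset.card A) h := Multiset.eq_replicate_card.2 hx
    have h2 := hA.1.2
    rw [h1, Multiset.sum_replicate] at h2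
    have h3 := Nat.le_of_dvd (Multiset.card_pos.2 hA.2.1) (addOrderOf_dvd_of_nsmul_eq_zero h2)
    symm
    apply hA.eq_of_le
    · rw [← ho]; simp
    · intro h0
      have h4 := congrArg Multiset.card h0
      have h5 := addOrderOf_pos g
      rw [Multiset.card_replicate, Multiset.card_zero] at h4
      omega
    · rw [h1, ← ho]
      exact Multiset.replicate_le_replicate h |>.2 h3
  by_cases h1 : g ∈ A
  · by_cases h2 : -g ∈ A
    · left
      symm
      apply hA.eq_of_le
      · simp
      · simp
      · rw [Multiset.le_iff_subset (by simpa using hne)]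
        intro x hx
        simp at hx
        rcases hx with rfl | rfl <;> assumption
    · right; left
      apply key g rfl
      intro x hx
      rcases hA.1.1 x hx with h | h
      · exact h
      · rw [Set.mem_singleton_iff] at h
        subst h
        exact absurd hx h2
  · right; right
    apply key (-g) (addOrderOf_neg g)
    intro x hx
    rcases hA.1.1 x hx with h | h
    · subst h
      exact absurd hx h1
    · exact h

lemma pair_count [DecidableEq G] {g : G} (hne : g ≠ -g) (l : Multiset (Multiset G))
    (hl : ∀ A ∈ l, IsAtomSeq ({g, -g} : Set G) A) :
    ∃ x y z : ℕ, Multiset.card l = x + y + z ∧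
      Multiset.count g l.sum = addOrderOf g * x + z ∧
      Multiset.count (-g) l.sum = addOrderOf g * y + z := by
  induction l using Multiset.induction with
  | empty => exact ⟨0, 0, 0, by simp, by simp, by simp⟩
  | cons A s ih =>
    obtain ⟨x, y, z, h1, h2, h3⟩ := ih fun A hA => hl A (by simp [hA])
    rw [Multiset.sum_cons, Multiset.count_add, Multiset.count_add, Multiset.card_cons, h1, h2, h3]
    rcases pair_atom (hl A (by simp)) hne with h | h | h
    · refine ⟨x, y, z + 1, by omega, ?_, ?_⟩
      · rw [h]; simp [hne]; omega
      · rw [h]; simp [hne.symm]; omega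
    · refine ⟨x + 1, y, z, by omega, ?_, ?_⟩
      · rw [h, Multiset.count_replicate_self]; ring
      · rw [h, Multiset.count_replicate, if_neg hne]; ring
    · refine ⟨x, y + 1, z, by omega, ?_, ?_⟩
      · rw [h, Multiset.count_replicate, if_neg hne.symm]; ring
      · rw [h, Multiset.count_replicate_self]; ring

lemma pair_delta {g : G} (hg : 3 ≤ addOrderOf g) :
    (DeltaSet ({g, -g} : Set G)).Nonempty ∧
      addOrderOf g - 2 ≤ sInf (DeltaSet ({g, -g} : Set G)) := by
  classical
  have hne : g ≠ -g := by
    intro h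
    have : 2 • g = 0 := by
      rw [two_nsmul]; nth_rewrite 2 [h]; simp
    have := Nat.le_of_dvd (by norm_num) (addOrderOf_dvd_of_nsmul_eq_zero this)
    omega
  have hatom : IsAtomSeq ({g, -g} : Set G) ({g, -g} : Multiset G) := by
    refine ⟨⟨by simp, by simp⟩, by simp, ?_⟩
    intro A B hA hB hA0 hB0 hAB
    have hc := congrArg Multiset.card hAB
    have h1 := Multiset.card_pos.2 hA0
    have h2 := Multiset.card_pos.2 hB0
    rw [Multiset.card_add] at hc
    simp at hc
    have h3 : Multiset.card A = 1 := by omega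
    obtain ⟨a, rfl⟩ := Multiset.card_eq_one.1 h3
    have h4 : a = 0 := by simpa using hA.2
    have h5 : g ≠ 0 := by
      rintro rfl
      simp at hne
    rcases hA.1 a (by simp) with h | h
    · exact h5 (h ▸ h4)
    · rw [Set.mem_singleton_iff, h4] at h
      exact h5 (by simpa using h.symm)
  have hnon : (DeltaSet ({g, -g} : Set G)).Nonempty := by
    refine (delta_le ({Multiset.replicate (addOrderOf g) g,
        Multiset.replicate (addOrderOf (-g)) (-g)} : Multiset (Multiset G))
      (Multiset.replicate (addOrderOf g) ({g, -g} : Multiset G)) ?_ ?_ ?_ ?_).1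
    · intro A hA
      simp only [Multiset.insert_eq_cons, Multiset.mem_cons, Multiset.mem_singleton] at hA
      rcases hA with rfl | rfl
      · exact atom_replicate (by simp)
      · exact atom_replicate (by simp)
    · intro A hA
      rw [Multiset.eq_of_mem_replicate hA]
      exact hatom
    · rw [Multiset.sum_replicate, addOrderOf_neg, Multiset.insert_eq_cons, Multiset.insert_eq_cons,
        ← Multiset.singleton_add g, nsmul_add, Multiset.nsmul_singleton, Multiset.nsmul_singleton]
      simp
    · simp
      omega
  refine ⟨hnon, le_csInf hnon ?_⟩
  rintro d ⟨B, _, _, a, ⟨l, rfl, hl, hB⟩, b, ⟨l', rfl, hl', hB'⟩, hlt, rfl, _⟩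
  obtain ⟨x, y, z, h1, h2, h3⟩ := pair_count hne l hl
  obtain ⟨x', y', z', h1', h2', h3'⟩ := pair_count hne l' hl'
  rw [hB] at h2 h3
  rw [hB'] at h2' h3'
  rw [h2] at h2'
  rw [h3] at h3'
  rw [h1, h1'] at hlt ⊢
  generalize addOrderOf g = n at *
  zify at h2' h3' hlt
  have e1 : (n : ℤ) * (((x : ℤ) - x') - (y - y')) = 0 := by linarith
  have e2 : ((x : ℤ) - x') - (y - y') = 0 := by
    rcases mul_eq_zero.1 e1 with h | h
    · exfalso; omega
    · exact h
  obtain ⟨c, hc⟩ : ∃ c : ℤ, (x : ℤ) - x' = c := ⟨_, rfl⟩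
  have e3 : (y : ℤ) - y' = c := by linarith
  have e4 : (z' : ℤ) - z = n * c := by rw [← hc]; linarith
  have e5 : ((x' : ℤ) + y' + z') - (x + y + z) = (n - 2) * c := by
    have : ((n : ℤ) - 2) * c = n * c - 2 * c := by ring
    rw [this, ← e4]; linarith
  have hn : (1 : ℤ) ≤ n - 2 := by omega
  have hcpos : 1 ≤ c := by
    by_contra hcon
    have : ((n : ℤ) - 2) * c ≤ 0 := mul_nonpos_of_nonneg_of_nonpos (by omega) (by omega)
    omega
  have : (n : ℤ) - 2 ≤ (n - 2) * c := le_mul_of_one_le_right (by omega) hcpos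
  omega

end PairPart

section LatticePart

variable {G : Type*} [AddCommGroup G]

/-- the multiset with multiplicities `c` on `S` -/
def mulS (c : G → ℕ) (S : Finset G) : Multiset G := ∑ s ∈ S, Multiset.replicate (c s) s

lemma mem_mulS {c : G → ℕ} {S : Finset G} {x : G} (h : x ∈ mulS c S) : x ∈ S := by
  rw [mulS, Multiset.mem_sum] at h
  obtain ⟨i, hi, hx⟩ := h
  rwa [Multiset.eq_of_mem_replicate hx]

lemma count_mulS [DecidableEq G] (c : G → ℕ) (S : Finset G) (x : G) :
    Multiset.count x (mulS c S) = if x ∈ S then c x else 0 := by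
  rw [mulS, Multiset.count_sum']
  simp [Multiset.count_replicate]

lemma sum_mulS (c : G → ℕ) (S : Finset G) : (mulS c S).sum = ∑ s ∈ S, c s • s := by
  rw [mulS, Multiset.sum_sum]
  simp

/-- integer-valued multiplicities -/
def cnt [DecidableEq G] (C : Multiset G) : G → ℤ := fun g => (Multiset.count g C : ℤ)

lemma cnt_add [DecidableEq G] (A B : Multiset G) : cnt (A + B) = cnt A + cnt B := by
  ext g; simp [cnt]

lemma cnt_zero [DecidableEq G] : cnt (0 : Multiset G) = 0 := by
  ext g; simp [cnt]

lemma cnt_inj [DecidableEq G] {A B : Multiset G} (h : cnt A = cnt B) : A = B := by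
  ext g
  have := congrFun h g
  simpa [cnt] using this

/-- lattice generated by atoms of small support -/
def smallLat [DecidableEq G] (G₀ : Set G) (r : ℕ) : AddSubgroup (G → ℤ) :=
  AddSubgroup.closure {x | ∃ C : Multiset G, IsAtomSeq G₀ C ∧ C.toFinset.card ≤ r + 1 ∧ x = cnt C}

lemma smallLat_repr [DecidableEq G] {G₀ : Set G} {r : ℕ} {x : G → ℤ} (hx : x ∈ smallLat G₀ r) :
    ∃ l l' : Multiset (Multiset G),
      (∀ A ∈ l, IsAtomSeq G₀ A ∧ A.toFinset.card ≤ r + 1) ∧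
      (∀ A ∈ l', IsAtomSeq G₀ A ∧ A.toFinset.card ≤ r + 1) ∧
      x + cnt l.sum = cnt l'.sum := by
  unfold smallLat at hx
  induction hx using AddSubgroup.closure_induction with
  | mem x hx =>
    obtain ⟨C, h1, h2, rfl⟩ := hx
    exact ⟨0, {C}, by simp, by simpa using ⟨h1, h2⟩, by simp [cnt_zero]⟩
  | zero => exact ⟨0, 0, by simp, by simp, by simp⟩
  | add x y _ _ hx hy =>
    obtain ⟨l1, l1', a1, b1, c1⟩ := hx
    obtain ⟨l2, l2', a2, b2, c2⟩ := hy
    refine ⟨l1 + l2, l1' + l2', ?_, ?_, ?_⟩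
    · intro A hA
      rcases Multiset.mem_add.1 hA with h | h
      · exact a1 A h
      · exact a2 A h
    · intro A hA
      rcases Multiset.mem_add.1 hA with h | h
      · exact b1 A h
      · exact b2 A h
    · rw [Multiset.sum_add, Multiset.sum_add, cnt_add, cnt_add, ← c1, ← c2]
      abel
  | neg x _ hx =>
    obtain ⟨l1, l1', a1, b1, c1⟩ := hx
    refine ⟨l1', l1, b1, a1, ?_⟩
    rw [← c1]; abel

lemma cnt_mem_smallLat [DecidableEq G] {G₀ : Set G} {r : ℕ} {B : Multiset G}
    (hB : IsZeroSumSeq G₀ B) (hc : B.toFinset.card ≤ r + 1) : cnt B ∈ smallLat G₀ r := by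
  obtain ⟨l, hl, rfl⟩ := exists_factor _ B le_rfl hB
  have hsmall : ∀ A ∈ l, cnt A ∈ smallLat G₀ r := by
    intro A hA
    have hle : A ≤ l.sum := Multiset.single_le_sum (fun x _ => Multiset.zero_le x) A hA
    refine AddSubgroup.subset_closure ⟨A, hl A hA, le_trans (Finset.card_le_card ?_) hc, rfl⟩
    exact Multiset.toFinset_subset.2 (Multiset.subset_of_le hle)
  clear hl hB hc
  induction l using Multiset.induction with
  | empty => rw [Multiset.sum_zero, cnt_zero]; exact AddSubgroup.zero_mem _
  | cons a s ih =>
    rw [Multiset.sum_cons, cnt_add]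
    exact AddSubgroup.add_mem _ (hsmall a (by simp)) (ih fun A hA => hsmall A (by simp [hA]))

lemma vec_mem_smallLat [DecidableEq G] [Fintype G] {G₀ : Set G} {r : ℕ} {S : Finset G}
    (hS : (S : Set G) ⊆ G₀) (hc : S.card ≤ r + 1) {y : G → ℤ} (hy : ∀ g, g ∉ S → y g = 0)
    (hsum : ∑ g, y g • g = 0) : y ∈ smallLat G₀ r := by
  set n := AddMonoid.exponent G with hn
  have hnpos : 0 < n := Nat.pos_of_ne_zero AddMonoid.exponent_ne_zero_of_finite
  have hsum' : ∑ g ∈ S, y g • g = 0 := by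
    rw [← hsum]
    apply Finset.sum_subset (Finset.subset_univ _)
    intro x _ hx
    rw [hy x hx, zero_smul]
  have hnn : ∀ g, 0 ≤ y g + n * |y g| := by
    intro g
    have h1 : |y g| ≤ n * |y g| := le_mul_of_one_le_left (abs_nonneg _) (by exact_mod_cast hnpos)
    have h2 := neg_abs_le (y g)
    linarith
  have hkill : ∀ (c : ℕ) (g : G), (n * c) • g = 0 := by
    intro c g
    rw [mul_comm, mul_nsmul', AddMonoid.exponent_nsmul_eq_zero, smul_zero]
  have hfin : ∀ c : G → ℕ, (mulS c S).toFinset.card ≤ r + 1 := fun c =>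
    le_trans (Finset.card_le_card fun x hx => mem_mulS (Multiset.mem_toFinset.1 hx)) hc
  have h1 : cnt (mulS (fun g => (y g + n * |y g|).toNat) S) ∈ smallLat G₀ r := by
    refine cnt_mem_smallLat ⟨fun x hx => hS (mem_mulS hx), ?_⟩ (hfin _)
    rw [sum_mulS, ← hsum']
    apply Finset.sum_congr rfl
    intro g _
    rw [← natCast_zsmul, Int.toNat_of_nonneg (hnn g), add_smul, Int.abs_eq_natAbs]
    have : ((n : ℤ) * ((y g).natAbs : ℤ)) • g = (n * (y g).natAbs) • g := by
      rw [← natCast_zsmul]; push_cast; rfl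
    rw [this, hkill, add_zero]
  have h2 : cnt (mulS (fun g => n * (y g).natAbs) S) ∈ smallLat G₀ r := by
    refine cnt_mem_smallLat ⟨fun x hx => hS (mem_mulS hx), ?_⟩ (hfin _)
    rw [sum_mulS]
    exact Finset.sum_eq_zero fun g _ => hkill _ _
  have h3 : y = cnt (mulS (fun g => (y g + n * |y g|).toNat) S) -
      cnt (mulS (fun g => n * (y g).natAbs) S) := by
    ext g
    simp only [cnt, Pi.sub_apply, count_mulS]
    split_ifs with hg
    · rw [Int.toNat_of_nonneg (hnn g), Int.abs_eq_natAbs]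
      push_cast
      ring
    · simp [hy g hg]
  rw [h3]
  exact AddSubgroup.sub_mem _ h1 h2

lemma closure_coeff [DecidableEq G] [Fintype G] (E : Finset G) {x : G}
    (hx : x ∈ AddSubgroup.closure (E : Set G)) :
    ∃ a : G → ℤ, (∀ g, g ∉ E → a g = 0) ∧ ∑ g, a g • g = x := by
  induction hx using AddSubgroup.closure_induction with
  | mem x hx =>
    refine ⟨Pi.single x 1, fun g hg => ?_, ?_⟩
    · rw [Pi.single_apply, if_neg]
      rintro rfl
      exact hg hx
    · simp [Pi.single_apply, ite_smul]
  | zero => exact ⟨0, by simp, by simp⟩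
  | add x y _ _ hx hy =>
    obtain ⟨a, h1, h2⟩ := hx
    obtain ⟨b, h3, h4⟩ := hy
    refine ⟨a + b, fun g hg => by simp [h1 g hg, h3 g hg], ?_⟩
    simp [add_smul, Finset.sum_add_distrib, h2, h4]
  | neg x _ hx =>
    obtain ⟨a, h1, h2⟩ := hx
    exact ⟨-a, fun g hg => by simp [h1 g hg], by simp [h2]⟩

lemma lattice_step [DecidableEq G] [Fintype G] {G₀ : Set G} {r : ℕ} {E : Finset G}
    (hE : (E : Set G) ⊆ G₀) (hc : E.card ≤ r) {t : ℕ}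
    (ht : ∀ x ∈ G₀, t • x ∈ AddSubgroup.closure (E : Set G)) (W : Multiset G)
    (hW : ∀ x ∈ W, x ∈ G₀) : ∃ b : G → ℤ, (∀ g, g ∉ E → b g = 0) ∧
      t • cnt W - b ∈ smallLat G₀ r ∧ ∑ g, b g • g = t • W.sum := by
  induction W using Multiset.induction with
  | empty => exact ⟨0, by simp, by simp [cnt_zero, AddSubgroup.zero_mem], by simp⟩
  | cons f s ih =>
    obtain ⟨b, h1, h2, h3⟩ := ih fun x hx => hW x (by simp [hx])
    have hf : f ∈ G₀ := hW f (by simp)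
    obtain ⟨a, h4, h5⟩ := closure_coeff E (ht f hf)
    refine ⟨a + b, fun g hg => by simp [h1 g hg, h4 g hg], ?_, ?_⟩
    · have h6 : t • (Pi.single f (1 : ℤ) : G → ℤ) - a ∈ smallLat G₀ r := by
        refine vec_mem_smallLat (S := insert f E) ?_ ?_ ?_ ?_
        · intro x hx
          rcases Finset.mem_insert.1 (Finset.mem_coe.1 hx) with rfl | h
          · exact hf
          · exact hE h
        · exact (Finset.card_insert_le _ _).trans (by omega)
        · intro g hg
          rw [Finset.mem_insert, not_or] at hg
          simp [h4 g hg.2, Pi.single_apply, hg.1]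
        · have h7 : ∀ g : G, (t • (Pi.single f (1 : ℤ) : G → ℤ) - a) g • g =
              (if g = f then t • f else 0) - a g • g := by
            intro g
            rw [Pi.sub_apply, sub_smul, Pi.smul_apply, Pi.single_apply]
            split_ifs with h
            · subst h; simp
            · simp
          rw [Finset.sum_congr rfl fun g _ => h7 g, Finset.sum_sub_distrib, h5]
          simp
      have h8 : cnt (f ::ₘ s) = Pi.single f (1 : ℤ) + cnt s := by
        ext g
        simp only [cnt, Pi.add_apply, Pi.single_apply, Multiset.count_cons]
        split_ifs <;> push_cast <;> ring
      have h9 : t • cnt (f ::ₘ s) - (a + b) =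
          (t • (Pi.single f (1 : ℤ) : G → ℤ) - a) + (t • cnt s - b) := by
        rw [h8, smul_add]; abel
      rw [h9]
      exact AddSubgroup.add_mem _ h6 h2
    · simp [add_smul, Finset.sum_add_distrib, h5, h3]

lemma lattice_all [DecidableEq G] [Fintype G] {G₀ : Set G} {W : Multiset G}
    (hW : IsZeroSumSeq G₀ W) : cnt W ∈ smallLat G₀ (rankG G) := by
  have key : ∀ p : ℕ, p.Prime → ∃ t : ℕ, ¬ p ∣ t ∧ t • cnt W ∈ smallLat G₀ (rankG G) := by
    intro p hp
    obtain ⟨E, hE, hc, t, ht, hx⟩ := exists_small_sub G₀ p hp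
    obtain ⟨b, h1, h2, h3⟩ := lattice_step hE hc hx W hW.1
    refine ⟨t, ht, ?_⟩
    rw [hW.2, smul_zero] at h3
    have h4 := vec_mem_smallLat hE (by omega : E.card ≤ rankG G + 1) h1 h3
    have := AddSubgroup.add_mem _ h2 h4
    simpa using this
  rw [← QuotientAddGroup.eq_zero_iff, ← AddMonoid.addOrderOf_eq_one_iff]
  by_contra hne
  obtain ⟨t, ht, hm⟩ := key _ (Nat.minFac_prime hne)
  apply ht
  refine (Nat.minFac_dvd _).trans (addOrderOf_dvd_of_nsmul_eq_zero ?_)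
  rwa [← QuotientAddGroup.mk_nsmul, QuotientAddGroup.eq_zero_iff]

end LatticePart

section MainPart

variable {G : Type*} [AddCommGroup G]

lemma card_le_cn [Finite G] (A : Multiset G) :
    (Multiset.card A : ℚ) ≤ AddMonoid.exponent G * crossNumber A := by
  induction A using Multiset.induction with
  | empty => simp [cn_zero]
  | cons a s ih =>
    have h1 : crossNumber (a ::ₘ s) = (addOrderOf a : ℚ)⁻¹ + crossNumber s := by
      simp [crossNumber]
    have hpos : (0 : ℚ) < addOrderOf a := by exact_mod_cast addOrderOf_pos a
    have hle : (addOrderOf a : ℚ) ≤ AddMonoid.exponent G := by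
      exact_mod_cast Nat.le_of_dvd (Nat.pos_of_ne_zero AddMonoid.exponent_ne_zero_of_finite)
        (AddMonoid.addOrder_dvd_exponent a)
    have h2 : (1 : ℚ) ≤ AddMonoid.exponent G * (addOrderOf a : ℚ)⁻¹ := by
      rw [← div_eq_mul_inv, le_div_iff₀ hpos, one_mul]; exact hle
    rw [h1, Multiset.card_cons, mul_add]
    push_cast
    linarith

lemma slot_le [DecidableEq G] (h : G) (y : ℕ) (l : Multiset (Multiset G)) :
    (y + 1) * Multiset.countP (fun V => y < Multiset.count h V) l ≤ Multiset.count h l.sum := by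
  induction l using Multiset.induction with
  | empty => simp
  | cons a s ih =>
    rw [Multiset.countP_cons, Multiset.sum_cons, Multiset.count_add]
    split_ifs with hc
    · rw [mul_add]; omega
    · rw [mul_add]; omega

lemma cover_le {α β : Type*} (T : Finset β) (P : β → α → Prop) [∀ b, DecidablePred (P b)]
    (l : Multiset α) (h : ∀ V ∈ l, ∃ b ∈ T, P b V) :
    Multiset.card l ≤ ∑ b ∈ T, Multiset.countP (P b) l := by
  induction l using Multiset.induction with
  | empty => simp
  | cons a s ih =>
    have ih' := ih fun V hV => h V (Multiset.mem_cons_of_mem hV)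
    obtain ⟨b, hb, hP⟩ := h a (Multiset.mem_cons_self a s)
    have h1 : 1 ≤ ∑ b ∈ T, (if P b a then 1 else 0) := by
      calc 1 = (if P b a then 1 else 0) := by simp [hP]
        _ ≤ _ := Finset.single_le_sum (f := fun b => if P b a then 1 else 0)
            (fun _ _ => Nat.zero_le _) hb
    simp only [Multiset.countP_cons, Finset.sum_add_distrib, Multiset.card_cons]
    omega

/-- a nonmember of all good factorizations contains a bad atom -/
lemma spoil [DecidableEq G] [Finite G] {G₀ : Set G} {r d : ℕ}
    (hlcn : ∀ U, IsAtomSeq G₀ U → 1 ≤ crossNumber U)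
    (hfull : ∀ U, IsAtomSeq G₀ U → crossNumber U ≠ 1 → ∀ x ∈ G₀, x ∈ U)
    (hbig : ∀ U, IsAtomSeq G₀ U → crossNumber U ≠ 1 → (d : ℚ) + 1 ≤ crossNumber U)
    (hd : AddMonoid.exponent G + r + 2 ≤ 2 * (d + 2))
    {A : Multiset G} (hA : IsAtomSeq G₀ A) (hA1 : crossNumber A = 1)
    (hAr : A.toFinset.card ≤ r + 1) :
    ∀ (N : ℕ) (l : Multiset (Multiset G)) (Y : Multiset G), Multiset.card l = N →
      (∀ V ∈ l, IsAtomSeq G₀ V ∧ crossNumber V = 1) → l.sum = Y + A → IsZeroSumSeq G₀ Y →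
      ∃ l' : Multiset (Multiset G), (∀ V ∈ l', IsAtomSeq G₀ V ∧ crossNumber V = 1) ∧ l'.sum = Y := by
  intro N
  induction N with
  | zero =>
    intro l Y hc _ hs _
    rw [Multiset.card_eq_zero] at hc
    subst hc
    exfalso
    have h0 : Multiset.card (Y + A) = 0 := by rw [← hs]; simp
    rw [Multiset.card_add] at h0
    exact hA.2.1 (Multiset.card_eq_zero.1 (by omega))
  | succ N ih =>
    intro l Y hc hl hs hY
    by_cases hV : ∃ V ∈ l, V ≤ Y
    · obtain ⟨V, hVl, hVY⟩ := hV
      obtain ⟨l1, rfl⟩ := Multiset.exists_cons_of_mem hVl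
      obtain ⟨Y1, rfl⟩ := Multiset.le_iff_exists_add.1 hVY
      rw [Multiset.sum_cons, add_assoc] at hs
      have hs1 := add_left_cancel hs
      obtain ⟨l', hl', hs'⟩ := ih l1 Y1 (by simpa using hc)
        (fun W hW => hl W (Multiset.mem_cons_of_mem hW)) hs1
        ((hl V hVl).1.1.right hY)
      refine ⟨V ::ₘ l', ?_, by rw [Multiset.sum_cons, hs']⟩
      intro W hW
      rcases Multiset.mem_cons.1 hW with rfl | hW
      · exact hl _ hVl
      · exact hl' W hW
    · push Not at hV
      obtain ⟨l', hl', hs'⟩ := exists_factor _ Y le_rfl hY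
      by_cases hg : ∀ V ∈ l', crossNumber V = 1
      · exact ⟨l', fun V hV => ⟨hl' V hV, hg V hV⟩, hs'⟩
      exfalso
      push Not at hg
      obtain ⟨U, hUl, hU1⟩ := hg
      have hUY : U ≤ Y := by rw [← hs']; exact Multiset.le_sum_of_mem hUl
      have hkY : (d : ℚ) + 1 ≤ crossNumber Y := by
        obtain ⟨Z, rfl⟩ := Multiset.le_iff_exists_add.1 hUY
        have := hbig U (hl' U hUl) hU1
        have := cn_nonneg Z
        rw [cn_add]; linarith
      have hcl : (Multiset.card l : ℚ) = crossNumber Y + 1 := by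
        rw [← cn_sum_good l fun V hV => (hl V hV).2, hs, cn_add, hA1]
      have hcl2 : d + 2 ≤ Multiset.card l := by
        have : ((d + 2 : ℕ) : ℚ) ≤ Multiset.card l := by push_cast; linarith
        exact_mod_cast this
      have hcov := cover_le A.toFinset (fun h V => Multiset.count h Y < Multiset.count h V) l (by
        intro V hVl
        have h1 := hV V hVl
        rw [Multiset.le_iff_count] at h1
        push Not at h1
        obtain ⟨h, hh⟩ := h1
        refine ⟨h, ?_, hh⟩
        have h2 : V ≤ Y + A := by rw [← hs]; exact Multiset.le_sum_of_mem hVl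
        have h3 := Multiset.le_iff_count.1 h2 h
        rw [Multiset.count_add] at h3
        rw [Multiset.mem_toFinset, ← Multiset.count_pos]
        omega)
      have hslot : ∀ h ∈ A.toFinset,
          2 * Multiset.countP (fun V => Multiset.count h Y < Multiset.count h V) l ≤
            Multiset.count h A + 1 := by
        intro h hh
        have h1 := slot_le h (Multiset.count h Y) l
        rw [hs, Multiset.count_add] at h1
        have hhU : h ∈ U := hfull U (hl' U hUl) hU1 h (hA.1.1 h (Multiset.mem_toFinset.1 hh))
        have hy : 1 ≤ Multiset.count h Y :=
          Multiset.count_pos.2 (Multiset.mem_of_le hUY hhU)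
        generalize Multiset.countP (fun V => Multiset.count h Y < Multiset.count h V) l = c at h1 ⊢
        generalize Multiset.count h Y = y at h1 hy ⊢
        rcases Nat.eq_zero_or_pos c with rfl | hc0
        · omega
        · nlinarith
      have hsum := Finset.sum_le_sum hslot
      rw [← Finset.mul_sum, Finset.sum_add_distrib, Multiset.toFinset_sum_count_eq] at hsum
      have hcA : Multiset.card A ≤ AddMonoid.exponent G := by
        have := card_le_cn A
        rw [hA1, mul_one] at this
        exact_mod_cast this
      simp only [Finset.sum_const, smul_eq_mul, mul_one] at hsum
      omega

lemma spoil_all [DecidableEq G] [Finite G] {G₀ : Set G} {r d : ℕ}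
    (hlcn : ∀ U, IsAtomSeq G₀ U → 1 ≤ crossNumber U)
    (hfull : ∀ U, IsAtomSeq G₀ U → crossNumber U ≠ 1 → ∀ x ∈ G₀, x ∈ U)
    (hbig : ∀ U, IsAtomSeq G₀ U → crossNumber U ≠ 1 → (d : ℚ) + 1 ≤ crossNumber U)
    (hd : AddMonoid.exponent G + r + 2 ≤ 2 * (d + 2)) (X : Multiset G) (hX : IsZeroSumSeq G₀ X)
    (l : Multiset (Multiset G)) :
    (∀ A ∈ l, IsAtomSeq G₀ A ∧ crossNumber A = 1 ∧ A.toFinset.card ≤ r + 1) →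
    ∀ l' : Multiset (Multiset G), (∀ V ∈ l', IsAtomSeq G₀ V ∧ crossNumber V = 1) →
      l'.sum = X + l.sum →
      ∃ l' : Multiset (Multiset G), (∀ V ∈ l', IsAtomSeq G₀ V ∧ crossNumber V = 1) ∧
        l'.sum = X := by
  induction l using Multiset.induction with
  | empty => intro _ l' hl' hs; exact ⟨l', hl', by simpa using hs⟩
  | cons A s ih =>
    intro hl l' hl' hs
    obtain ⟨hA, hA1, hAr⟩ := hl A (Multiset.mem_cons_self A s)
    have hl2 := fun B (hB : B ∈ s) => hl B (Multiset.mem_cons_of_mem hB)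
    obtain ⟨l2, h2, h3⟩ := spoil hlcn hfull hbig hd hA hA1 hAr _ l' (X + s.sum) rfl hl'
      (by rw [hs, Multiset.sum_cons]; abel) (hX.add' (zs_sum s fun B hB => (hl2 B hB).1.1))
    exact ih hl2 l2 h2 h3

/-- an atom of cross number different from one contains all of `G₀` -/
lemma bad_full [Finite G] {G₀ : Set G} (hmin : IsMinNonHalfFactorial G₀) {U : Multiset G}
    (hU : IsAtomSeq G₀ U) (h1 : crossNumber U ≠ 1) : ∀ x ∈ G₀, x ∈ U := by
  intro x hx
  by_contra hxU
  apply h1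
  refine cn_eq_one_of_hf (G₀ := {y | y ∈ U}) (hmin.2 _ ⟨fun y hy => hU.1.1 y hy, fun h => ?_⟩)
    (hU.change fun y hy => hy)
  exact hxU (h hx)

lemma exists_bad {G₀ : Set G} (hne : (DeltaSet G₀).Nonempty) :
    ∃ U, IsAtomSeq G₀ U ∧ crossNumber U ≠ 1 := by
  by_contra! hcon
  obtain ⟨d, B, _, _, a, ⟨l, hc, hl, hs⟩, b, ⟨l', hc', hl', hs'⟩, hab, _⟩ := hne
  have e1 := cn_sum_good l fun A hA => hcon A (hl A hA)
  have e2 := cn_sum_good l' fun A hA => hcon A (hl' A hA)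
  rw [hs] at e1
  rw [hs', e1] at e2
  have : Multiset.card l = Multiset.card l' := by exact_mod_cast e2
  omega

lemma bound_card [DecidableEq G] [Finite G] {F : Finset G}
    (hlcn : ∀ U, IsAtomSeq (F : Set G) U → 1 ≤ crossNumber U) {X : Multiset G}
    (hX : IsAtomSeq (F : Set G) X) (hX1 : 1 < crossNumber X) :
    sInf (DeltaSet (F : Set G)) + 2 ≤ F.card := by
  have hlt : ∀ h ∈ F, Multiset.count h X < addOrderOf h := by
    intro h hh
    by_contra! hc
    have := hX.eq_of_le (A := Multiset.replicate (addOrderOf h) h) (by simp)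
      (atom_replicate (G₀ := (F : Set G)) (by exact_mod_cast hh)).2.1
      (Multiset.le_count_iff_replicate_le.1 hc)
    rw [← this, cn_replicate_order] at hX1
    exact lt_irrefl _ hX1
  set Z := mulS (fun h => addOrderOf h - Multiset.count h X) F with hZ
  set lF : Multiset (Multiset G) := F.val.map fun h => Multiset.replicate (addOrderOf h) h with hlF
  have hlFs : lF.sum = mulS addOrderOf F := rfl
  have hlFa : ∀ A ∈ lF, IsAtomSeq (F : Set G) A := by
    intro A hA
    obtain ⟨h, hh, rfl⟩ := Multiset.mem_map.1 hA
    exact atom_replicate (by exact_mod_cast hh)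
  have hlF1 : ∀ A ∈ lF, crossNumber A = 1 := by
    intro A hA
    obtain ⟨h, hh, rfl⟩ := Multiset.mem_map.1 hA
    exact cn_replicate_order h
  have hcF : Multiset.card lF = F.card := by simp [hlF]
  have hXZ : X + Z = lF.sum := by
    rw [hlFs]
    ext h
    rw [Multiset.count_add, hZ, count_mulS, count_mulS]
    split_ifs with hh
    · have := hlt h hh; omega
    · rw [Multiset.count_eq_zero.2 fun hx => hh (by exact_mod_cast hX.1.1 h hx)]
  have hZz : IsZeroSumSeq (F : Set G) Z := by
    apply hX.1.right
    rw [hXZ]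
    exact zs_sum _ fun A hA => (hlFa A hA).1
  have hZ0 : Z ≠ 0 := by
    intro h0
    obtain ⟨x, hx⟩ := Multiset.exists_mem_of_ne_zero hX.2.1
    have hxF : x ∈ F := by exact_mod_cast hX.1.1 x hx
    have h2 : Multiset.count x Z = 0 := by rw [h0]; simp
    rw [hZ, count_mulS, if_pos hxF] at h2
    have := hlt x hxF
    omega
  obtain ⟨l, hl, hls⟩ := exists_factor _ Z le_rfl hZz
  have hl0 : 1 ≤ Multiset.card l := by
    rw [Nat.one_le_iff_ne_zero]
    intro h
    rw [Multiset.card_eq_zero] at h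
    rw [h] at hls
    exact hZ0 (by simpa using hls.symm)
  have hk : crossNumber X + crossNumber Z = F.card := by
    rw [← cn_add, hXZ, cn_sum_good lF hlF1, hcF]
  have hkl := cn_sum_ge l fun A hA => hlcn A (hl A hA)
  rw [hls] at hkl
  have hlt2 : Multiset.card l + 1 < F.card := by
    have : (Multiset.card l : ℚ) + 1 < F.card := by linarith
    exact_mod_cast this
  have := (delta_le (X ::ₘ l) lF (by
    intro A hA
    rcases Multiset.mem_cons.1 hA with rfl | hA
    · exact hX
    · exact hl A hA) hlFa (by rw [Multiset.sum_cons, hls, hXZ])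
    (by rw [Multiset.card_cons, hcF]; omega)).2
  rw [Multiset.card_cons, hcF] at this
  omega

lemma lcn_false [DecidableEq G] [Fintype G] {G₀ : Set G} (hmin : IsMinNonHalfFactorial G₀)
    (hlcn : ∀ U, IsAtomSeq G₀ U → 1 ≤ crossNumber U)
    (hr : rankG G + 2 ≤ AddMonoid.exponent G)
    (hd : AddMonoid.exponent G ≤ sInf (DeltaSet G₀) + 2) : False := by
  obtain ⟨X, hX, hX1⟩ := exists_bad hmin.1
  have hfull : ∀ U, IsAtomSeq G₀ U → crossNumber U ≠ 1 → ∀ x ∈ G₀, x ∈ U :=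
    fun U hU h1 => bad_full hmin hU h1
  have hgt : ∀ U, IsAtomSeq G₀ U → crossNumber U ≠ 1 → 1 < crossNumber U :=
    fun U hU h1 => lt_of_le_of_ne (hlcn U hU) (Ne.symm h1)
  have hsmall : ∀ U, IsAtomSeq G₀ U → U.toFinset.card ≤ rankG G + 1 → crossNumber U = 1 := by
    intro U hU hc
    by_contra h1
    have hUF : (U.toFinset : Set G) = G₀ := by
      ext x
      simp only [Finset.mem_coe, Multiset.mem_toFinset]
      exact ⟨hU.1.1 x, hfull U hU h1 x⟩
    have := bound_card (F := U.toFinset) (by rw [hUF]; exact hlcn) (X := U)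
      (by rw [hUF]; exact hU) (hgt U hU h1)
    rw [hUF] at this
    omega
  have hrep : ∀ U, IsAtomSeq G₀ U → ∃ l l' : Multiset (Multiset G),
      (∀ A ∈ l, IsAtomSeq G₀ A ∧ A.toFinset.card ≤ rankG G + 1) ∧
      (∀ A ∈ l', IsAtomSeq G₀ A ∧ A.toFinset.card ≤ rankG G + 1) ∧
      U + l.sum = l'.sum := by
    intro U hU
    obtain ⟨l, l', h1, h2, h3⟩ := smallLat_repr (lattice_all hU.1)
    exact ⟨l, l', h1, h2, cnt_inj (by rw [cnt_add, h3])⟩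
  have hbig : ∀ U, IsAtomSeq G₀ U → crossNumber U ≠ 1 →
      ((sInf (DeltaSet G₀) : ℕ) : ℚ) + 1 ≤ crossNumber U := by
    intro U hU h1
    obtain ⟨l, l', hl, hl', hs⟩ := hrep U hU
    have e1 := cn_sum_good l fun A hA => hsmall A (hl A hA).1 (hl A hA).2
    have e2 := cn_sum_good l' fun A hA => hsmall A (hl' A hA).1 (hl' A hA).2
    have e3 := congrArg crossNumber hs
    rw [cn_add, e1, e2] at e3
    have hgtU := hgt U hU h1
    have hlt : Multiset.card l + 1 < Multiset.card l' := by
      have : (Multiset.card l : ℚ) + 1 < Multiset.card l' := by linarith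
      exact_mod_cast this
    have := (delta_le (U ::ₘ l) l' (by
      intro A hA
      rcases Multiset.mem_cons.1 hA with rfl | hA
      · exact hU
      · exact (hl A hA).1) (fun A hA => (hl' A hA).1) (by rw [Multiset.sum_cons, hs])
      (by rw [Multiset.card_cons]; omega)).2
    rw [Multiset.card_cons] at this
    have h5 : sInf (DeltaSet G₀) + 1 + Multiset.card l ≤ Multiset.card l' := by omega
    have h6 : ((sInf (DeltaSet G₀) : ℕ) : ℚ) + 1 + Multiset.card l ≤ Multiset.card l' := by
      exact_mod_cast h5
    linarith
  obtain ⟨l, l', hl, hl', hs⟩ := hrep X hX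
  obtain ⟨l2, h2, hs2⟩ := spoil_all (r := rankG G) hlcn hfull hbig (by omega) X hX.1 l
    (fun A hA => ⟨(hl A hA).1, hsmall A (hl A hA).1 (hl A hA).2, (hl A hA).2⟩) l'
    (fun A hA => ⟨(hl' A hA).1, hsmall A (hl' A hA).1 (hl' A hA).2⟩) hs.symm
  have hl20 : l2 ≠ 0 := by
    rintro rfl
    exact hX.2.1 (by simpa using hs2.symm)
  obtain ⟨V, hV⟩ := Multiset.exists_mem_of_ne_zero hl20
  have hVX := hX.eq_of_le (h2 V hV).1.1.2 (h2 V hV).1.2.1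
    (by rw [← hs2]; exact Multiset.le_sum_of_mem hV)
  exact hX1 (hVX ▸ (h2 V hV).2)

lemma nonlcn_case [Finite G] {G₀ : Set G} (hmin : IsMinNonHalfFactorial G₀)
    {U : Multiset G} (hU : IsAtomSeq G₀ U) (hU1 : crossNumber U < 1)
    (hd : AddMonoid.exponent G ≤ sInf (DeltaSet G₀) + 2) :
    ∃ g : G, addOrderOf g = AddMonoid.exponent G ∧ G₀ = {g, -g} := by
  have hpos : 0 < AddMonoid.exponent G := Nat.pos_of_ne_zero AddMonoid.exponent_ne_zero_of_finite
  have hdvd : ∀ g : G, addOrderOf g ∣ AddMonoid.exponent G :=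
    fun g => AddMonoid.addOrder_dvd_exponent g
  have hole : ∀ g : G, addOrderOf g ≤ AddMonoid.exponent G := fun g => Nat.le_of_dvd hpos (hdvd g)
  obtain ⟨l, hl, hls, hlc⟩ := power_factor (G₀ := G₀) _ hdvd U hU.1.1
  have hposQ : (0 : ℚ) < AddMonoid.exponent G := by exact_mod_cast hpos
  have hlt : Multiset.card l < AddMonoid.exponent G := by
    have : (Multiset.card l : ℚ) < AddMonoid.exponent G := by rw [hlc]; nlinarith
    exact_mod_cast this
  have h1 := (delta_le l (Multiset.replicate (AddMonoid.exponent G) U) hl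
    (fun A hA => (Multiset.eq_of_mem_replicate hA) ▸ hU) (by rw [hls, Multiset.sum_replicate])
    (by rw [Multiset.card_replicate]; exact hlt)).2
  rw [Multiset.card_replicate] at h1
  have hcl : Multiset.card U ≤ Multiset.card l := by
    have := card_le_cn U
    rw [← hlc] at this
    exact_mod_cast this
  have hc0 : Multiset.card U ≠ 0 := fun h => hU.2.1 (Multiset.card_eq_zero.1 h)
  have hc1 : Multiset.card U ≠ 1 := by
    intro h
    obtain ⟨a, rfl⟩ := Multiset.card_eq_one.1 h
    have h0 : a = 0 := by simpa using hU.1.2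
    subst h0
    simp [crossNumber] at hU1
  have hc2 : Multiset.card U = 2 := by omega
  have hl2 : Multiset.card l = 2 := by omega
  obtain ⟨a, b, rfl⟩ := Multiset.card_eq_two.1 hc2
  have hab : b = -a := by
    have := hU.1.2
    simp only [Multiset.insert_eq_cons, Multiset.sum_cons, Multiset.sum_singleton] at this
    exact (neg_eq_of_add_eq_zero_right this).symm
  subst hab
  have hkU : crossNumber ({a, -a} : Multiset G) = 2 * (addOrderOf a : ℚ)⁻¹ := by
    simp [crossNumber]; ring
  have hoa : (0 : ℚ) < addOrderOf a := by exact_mod_cast addOrderOf_pos a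
  have hao : addOrderOf a = AddMonoid.exponent G := by
    rw [hl2, hkU] at hlc
    have : (addOrderOf a : ℚ) = AddMonoid.exponent G := by
      field_simp at hlc
      push_cast at hlc
      linarith
    exact_mod_cast this
  have h3 : 3 ≤ addOrderOf a := by rw [hao]; omega
  refine ⟨a, hao, ?_⟩
  by_contra hne
  have hsub : ({a, -a} : Set G) ⊆ G₀ := by
    intro x hx
    apply hU.1.1
    simpa using hx
  have := hmin.2 {a, -a} ⟨hsub, fun h => hne (Set.Subset.antisymm h hsub)⟩
  have h4 := (pair_delta h3).1
  rw [this] at h4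
  exact Set.not_nonempty_empty h4

lemma delta_big [Finite G] {G₀ : Set G} (hmax : sInf (DeltaSet G₀) = sSup (DeltaStar G)) :
    AddMonoid.exponent G ≤ sInf (DeltaSet G₀) + 2 := by
  by_cases h3 : 3 ≤ AddMonoid.exponent G
  · obtain ⟨g, hg⟩ := AddMonoid.exists_addOrderOf_eq_exponent
      (AddMonoid.ExponentExists.of_finite (G := G))
    have h := pair_delta (g := g) (by omega)
    have hfin : (DeltaStar G).Finite := by
      refine (Set.finite_range fun G₀ : Set G => sInf (DeltaSet G₀)).subset ?_
      rintro d ⟨G₁, _, rfl⟩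
      exact ⟨G₁, rfl⟩
    have := le_csSup hfin.bddAbove (show sInf (DeltaSet ({g, -g} : Set G)) ∈ DeltaStar G from
      ⟨_, h.1, rfl⟩)
    have := h.2
    omega
  · omega

end MainPart

/-- If `|G| > 2`, `r(G) < exp(G) − 1`, and `G₀` is a minimal
non-half-factorial set with `min Δ(G₀) = max Δ*(G)`, then `G₀ = {g, −g}` for some
`g ∈ G` of order `exp(G)`. -/
theorem stmt_17 {G : Type*} [AddCommGroup G] [Fintype G] (hG : 2 < Fintype.card G)
    (hr : rankG G < AddMonoid.exponent G - 1) (G₀ : Set G)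
    (hmin : IsMinNonHalfFactorial G₀)
    (hmax : sInf (DeltaSet G₀) = sSup (DeltaStar G)) :
    ∃ g : G, addOrderOf g = AddMonoid.exponent G ∧ G₀ = {g, -g} := by
  classical
  have hd := delta_big hmax
  by_cases hlcn : ∀ U, IsAtomSeq G₀ U → 1 ≤ crossNumber U
  · exact (lcn_false hmin hlcn (by omega) hd).elim
  · push Not at hlcn
    obtain ⟨U, hU, hU1⟩ := hlcn
    exact nonlcn_case hmin hU hU1 hd
end

section
/- Let G be a finite abelian group with exp(G) = n and r(G) = r ≥ n, and let G₀ ⊆ G be a minimal non-half-factorial set with min Δ(G₀) = max Δ*(G). Then G₀ is an LCN-set, |G₀| = r + 1, and for every h ∈ G₀ and every h' ∈ G₀ \ {h}, one has h ∉ ⟨G₀ \ {h, h'}⟩. -/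
open Multiset

section Aux
variable {G : Type*} [AddCommGroup G]

theorem aux_isAtom_sub {E G₀ : Set G} (h : E ⊆ G₀) {A : Multiset G} (hA : IsAtomSeq E A) :
    IsAtomSeq G₀ A := by
  obtain ⟨⟨h1, h2⟩, h3, h4⟩ := hA
  refine ⟨⟨fun x hx => h (h1 x hx), h2⟩, h3, ?_⟩
  intro X Y hX hY hX0 hY0 hXY
  subst hXY
  exact h4 X Y ⟨fun x hx => h1 x (Multiset.mem_add.2 (Or.inl hx)), hX.2⟩
    ⟨fun x hx => h1 x (Multiset.mem_add.2 (Or.inr hx)), hY.2⟩ hX0 hY0 rfl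

theorem aux_isAtom_restrict {E G₀ : Set G} (h : E ⊆ G₀) {A : Multiset G} (hA : IsAtomSeq G₀ A)
    (hE : ∀ x ∈ A, x ∈ E) : IsAtomSeq E A := by
  obtain ⟨⟨h1, h2⟩, h3, h4⟩ := hA
  refine ⟨⟨hE, h2⟩, h3, ?_⟩
  intro X Y hX hY hX0 hY0 hXY
  exact h4 X Y ⟨fun x hx => h (hX.1 x hx), hX.2⟩ ⟨fun x hx => h (hY.1 x hx), hY.2⟩ hX0 hY0 hXY

theorem aux_zs_sub {G₀ : Set G} {X Y : Multiset G} (hX : IsZeroSumSeq G₀ X)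
    (hXY : IsZeroSumSeq G₀ (X + Y)) : IsZeroSumSeq G₀ Y := by
  refine ⟨fun x hx => hXY.1 x (Multiset.mem_add.2 (Or.inr hx)), ?_⟩
  have := hXY.2
  rw [Multiset.sum_add, hX.2, zero_add] at this
  exact this

/-- if an atom contains a nonempty zero-sum sequence, they are equal -/
theorem aux_atom_eq {G₀ : Set G} {X U : Multiset G} (hU : IsAtomSeq G₀ U)
    (hX : X.sum = 0) (hX0 : X ≠ 0) (hle : X ≤ U) : X = U := by
  obtain ⟨Y, rfl⟩ := Multiset.le_iff_exists_add.1 hle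
  have hXz : IsZeroSumSeq G₀ X :=
    ⟨fun x hx => hU.1.1 x (Multiset.mem_add.2 (Or.inl hx)), hX⟩
  by_contra hne
  exact hU.2.2 X Y hXz (aux_zs_sub hXz hU.1) hX0 (fun h => hne (by simp [h])) rfl

theorem aux_factor {G₀ : Set G} : ∀ (m : ℕ) (B : Multiset G), Multiset.card B = m →
    IsZeroSumSeq G₀ B → ∃ l : Multiset (Multiset G), (∀ A ∈ l, IsAtomSeq G₀ A) ∧ l.sum = B := by
  intro m
  induction m using Nat.strong_induction_on with
  | _ m ih =>
    intro B hm hB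
    by_cases h0 : B = 0
    · exact ⟨0, by simp, by simp [h0]⟩
    by_cases hat : IsAtomSeq G₀ B
    · exact ⟨{B}, by simpa using hat, by simp⟩
    have : ∃ X Y : Multiset G, IsZeroSumSeq G₀ X ∧ IsZeroSumSeq G₀ Y ∧ X ≠ 0 ∧ Y ≠ 0 ∧ B = X + Y := by
      by_contra hcon
      apply hat
      refine ⟨hB, h0, ?_⟩
      intro X Y a b c d e
      exact hcon ⟨X, Y, a, b, c, d, e⟩
    obtain ⟨X, Y, hX, hY, hX0, hY0, rfl⟩ := this
    have cX := Multiset.card_pos.2 hX0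
    have cY := Multiset.card_pos.2 hY0
    rw [Multiset.card_add] at hm
    obtain ⟨l1, h1, h1'⟩ := ih _ (by omega) X rfl hX
    obtain ⟨l2, h2, h2'⟩ := ih _ (by omega) Y rfl hY
    refine ⟨l1 + l2, ?_, by simp [h1', h2']⟩
    intro A hA
    rcases Multiset.mem_add.1 hA with h | h
    · exact h1 A h
    · exact h2 A h

theorem aux_sum_zs {G₀ : Set G} (l : Multiset (Multiset G)) (h : ∀ A ∈ l, IsAtomSeq G₀ A) :
    IsZeroSumSeq G₀ l.sum := by
  induction l using Multiset.induction_on with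
  | empty => simp [IsZeroSumSeq]
  | cons A l ih =>
    have h1 := ih (fun B hB => h B (Multiset.mem_cons_of_mem hB))
    have h2 := (h A (Multiset.mem_cons_self _ _)).1
    rw [Multiset.sum_cons]
    refine ⟨fun x hx => ?_, by rw [Multiset.sum_add, h1.2, h2.2, add_zero]⟩
    rcases Multiset.mem_add.1 hx with hx | hx
    · exact h2.1 x hx
    · exact h1.1 x hx

theorem aux_sum_ne {G₀ : Set G} (l : Multiset (Multiset G)) (h : ∀ A ∈ l, IsAtomSeq G₀ A)
    (hl : l ≠ 0) : l.sum ≠ 0 := by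
  obtain ⟨A, hA⟩ := Multiset.exists_mem_of_ne_zero hl
  obtain ⟨l', rfl⟩ := Multiset.exists_cons_of_mem hA
  rw [Multiset.sum_cons]
  intro h0
  exact (h A hA).2.1 (by
    have := congrArg Multiset.card h0
    simp at this
    exact this.1)

theorem aux_delta_exists {L : Set ℕ} {x y : ℕ} (hx : x ∈ L) (hy : y ∈ L) (h : x < y) :
    ∃ d ∈ DeltaOf L, d ≤ y - x ∧ 0 < d := by
  classical
  have hex : ∃ z, z ∈ L ∧ x < z := ⟨y, hy, h⟩
  have hs := Nat.find_spec hex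
  have hm : Nat.find hex ≤ y := Nat.find_min' hex ⟨hy, h⟩
  refine ⟨Nat.find hex - x, ⟨x, hx, Nat.find hex, hs.1, hs.2, rfl, ?_⟩, by omega, by omega⟩
  intro z hz hz2
  exact Nat.find_min hex hz2.2 ⟨hz, hz2.1⟩

theorem aux_delta_le {G₀ : Set G} {l1 l2 : Multiset (Multiset G)}
    (h1 : ∀ A ∈ l1, IsAtomSeq G₀ A) (h2 : ∀ A ∈ l2, IsAtomSeq G₀ A) (hs : l1.sum = l2.sum)
    (hlt : Multiset.card l1 < Multiset.card l2) :
    (DeltaSet G₀).Nonempty ∧ sInf (DeltaSet G₀) + Multiset.card l1 ≤ Multiset.card l2 := by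
  obtain ⟨d, hd, hd1, hd2⟩ := aux_delta_exists (L := LengthSet G₀ l2.sum)
    (x := Multiset.card l1) (y := Multiset.card l2) ⟨l1, rfl, h1, hs⟩ ⟨l2, rfl, h2, rfl⟩ hlt
  have hmem : d ∈ DeltaSet G₀ := by
    refine ⟨l2.sum, aux_sum_zs l2 h2, aux_sum_ne l2 h2 ?_, hd⟩
    rintro rfl
    simp at hlt
  have := Nat.sInf_le hmem
  exact ⟨⟨d, hmem⟩, by omega⟩

theorem aux_replicate_atom [Finite G] {G₀ : Set G} {g : G} (hg : g ∈ G₀) :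
    IsAtomSeq G₀ (Multiset.replicate (addOrderOf g) g) := by
  have hpos := addOrderOf_pos g
  refine ⟨⟨fun x hx => by rw [Multiset.eq_of_mem_replicate hx]; exact hg, ?_⟩, ?_, ?_⟩
  · simp
  · intro h
    have := congrArg Multiset.card h
    rw [Multiset.card_replicate, Multiset.card_zero] at this
    omega
  · intro A B hA hB hA0 hB0 h
    have hAle : A ≤ Multiset.replicate (addOrderOf g) g := by rw [h]; exact Multiset.le_add_right _ _
    have hA' : A = Multiset.replicate (Multiset.card A) g := by
      refine Multiset.eq_replicate.2 ⟨rfl, fun b hb => Multiset.eq_of_mem_replicate (Multiset.mem_of_le hAle hb)⟩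
    have hs := hA.2
    rw [hA', Multiset.sum_replicate] at hs
    have hdvd := addOrderOf_dvd_of_nsmul_eq_zero hs
    have c := congrArg Multiset.card h
    rw [Multiset.card_add, Multiset.card_replicate] at c
    have cA := Multiset.card_pos.2 hA0
    have cB := Multiset.card_pos.2 hB0
    have := Nat.le_of_dvd cA hdvd
    omega

/-- integer weight: exponent times cross number -/
noncomputable def auxWt (S : Multiset G) : ℕ :=
  (S.map (fun g => AddMonoid.exponent G / addOrderOf g)).sum

theorem auxWt_add (S T : Multiset G) : auxWt (S + T) = auxWt S + auxWt T := by
  simp [auxWt]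

theorem auxWt_zero : auxWt (0 : Multiset G) = 0 := by simp [auxWt]

theorem auxWt_listsum (l : Multiset (Multiset G)) : auxWt l.sum = (l.map auxWt).sum := by
  induction l using Multiset.induction_on with
  | empty => simp [auxWt]
  | cons A l ih => simp [auxWt_add, ih]

theorem aux_exp_pos [Finite G] : 0 < AddMonoid.exponent G :=
  Nat.pos_of_ne_zero AddMonoid.exponent_ne_zero_of_finite

theorem auxWt_replicate [Finite G] (g : G) :
    auxWt (Multiset.replicate (addOrderOf g) g) = AddMonoid.exponent G := by
  simp [auxWt]
  exact Nat.mul_div_cancel' (AddMonoid.addOrder_dvd_exponent g)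

theorem auxWt_card_le [Finite G] (S : Multiset G) : Multiset.card S ≤ auxWt S := by
  induction S using Multiset.induction_on with
  | empty => simp
  | cons a S ih =>
    have : 1 ≤ AddMonoid.exponent G / addOrderOf a :=
      Nat.div_pos (Nat.le_of_dvd aux_exp_pos (AddMonoid.addOrder_dvd_exponent a)) (addOrderOf_pos a)
    simp [auxWt] at ih ⊢
    omega

theorem auxWt_cross [Finite G] (S : Multiset G) :
    (auxWt S : ℚ) = AddMonoid.exponent G * crossNumber S := by
  induction S using Multiset.induction_on with
  | empty => simp [auxWt, crossNumber]
  | cons a S ih =>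
    have h1 : ((AddMonoid.exponent G / addOrderOf a : ℕ) : ℚ)
        = AddMonoid.exponent G * (addOrderOf a : ℚ)⁻¹ := by
      rw [Nat.cast_div (AddMonoid.addOrder_dvd_exponent a)
        (by exact_mod_cast (addOrderOf_pos a).ne')]
      rfl
    simp only [auxWt, crossNumber, Multiset.map_cons, Multiset.sum_cons, Nat.cast_add] at ih ⊢
    rw [ih, h1]
    ring

/-- the two factorizations of `n • A`. -/
theorem aux_two_lists [Finite G] {E : Set G} {A : Multiset G} (hA : IsAtomSeq E A) :
    ∃ l1 l2 : Multiset (Multiset G), (∀ X ∈ l1, IsAtomSeq E X) ∧ (∀ X ∈ l2, IsAtomSeq E X) ∧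
      l1.sum = AddMonoid.exponent G • A ∧ l2.sum = AddMonoid.exponent G • A ∧
      Multiset.card l1 = AddMonoid.exponent G ∧ Multiset.card l2 = auxWt A := by
  refine ⟨Multiset.replicate (AddMonoid.exponent G) A,
    A.bind (fun g => Multiset.replicate (AddMonoid.exponent G / addOrderOf g)
      (Multiset.replicate (addOrderOf g) g)), ?_, ?_, ?_, ?_, ?_, ?_⟩
  · intro X hX
    rw [Multiset.eq_of_mem_replicate hX]; exact hA
  · intro X hX
    obtain ⟨g, hg, hX⟩ := Multiset.mem_bind.1 hX
    rw [Multiset.eq_of_mem_replicate hX]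
    exact aux_replicate_atom (hA.1.1 g hg)
  · simp
  · have : ∀ S : Multiset G, (S.bind (fun g => Multiset.replicate (AddMonoid.exponent G / addOrderOf g)
      (Multiset.replicate (addOrderOf g) g))).sum = AddMonoid.exponent G • S := by
      intro S
      induction S using Multiset.induction_on with
      | empty => simp
      | cons a S ih =>
        rw [Multiset.cons_bind, Multiset.sum_add, ih, Multiset.sum_replicate,
          ← Multiset.nsmul_singleton, ← mul_nsmul',
          Nat.div_mul_cancel (AddMonoid.addOrder_dvd_exponent a), ← nsmul_add,
          Multiset.singleton_add]
    exact this A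
  · simp
  · simp [auxWt, Multiset.card_bind]

theorem aux_hf_unit [Finite G] {E : Set G} (hE : DeltaSet E = ∅) {A : Multiset G}
    (hA : IsAtomSeq E A) : auxWt A = AddMonoid.exponent G := by
  obtain ⟨l1, l2, h1, h2, s1, s2, c1, c2⟩ := aux_two_lists hA
  by_contra hne
  rcases lt_or_gt_of_ne hne with h | h
  · have := (aux_delta_le h2 h1 (s2.trans s1.symm) (by omega)).1
    simp [hE] at this
  · have := (aux_delta_le h1 h2 (s1.trans s2.symm) (by omega)).1
    simp [hE] at this

theorem aux_lcn [Finite G] {E : Set G} (hE : AddMonoid.exponent G ≤ sInf (DeltaSet E) + 1)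
    {A : Multiset G} (hA : IsAtomSeq E A) : AddMonoid.exponent G ≤ auxWt A := by
  obtain ⟨l1, l2, h1, h2, s1, s2, c1, c2⟩ := aux_two_lists hA
  by_contra hne
  have h := (aux_delta_le h2 h1 (s2.trans s1.symm) (by omega)).2
  have hc : 0 < auxWt A := lt_of_lt_of_le (Multiset.card_pos.2 hA.2.1) (auxWt_card_le A)
  have hcard : Multiset.card l2 = 1 := by omega
  obtain ⟨X, rfl⟩ := Multiset.card_eq_one.1 hcard
  rw [Multiset.sum_singleton] at s2
  have hX := h2 X (by simp)
  have hle : A ≤ X := by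
    rw [s2]
    obtain ⟨m, hm⟩ : ∃ m, AddMonoid.exponent G = m + 1 := ⟨AddMonoid.exponent G - 1, by omega⟩
    rw [hm, succ_nsmul]
    exact Multiset.le_add_left _ _
  have := aux_atom_eq hX hA.1.2 hA.2.1 hle
  rw [← this] at s2
  have c := congrArg Multiset.card s2
  rw [Multiset.card_nsmul] at c
  have := Multiset.card_pos.2 hA.2.1
  have : 2 ≤ AddMonoid.exponent G := by omega
  nlinarith

theorem aux_lists_wt_ge {n : ℕ} (l : Multiset (Multiset G)) (h : ∀ A ∈ l, n ≤ auxWt A) :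
    n * Multiset.card l ≤ auxWt l.sum := by
  rw [auxWt_listsum]
  induction l using Multiset.induction_on with
  | empty => simp
  | cons A l ih =>
    have h1 := ih (fun B hB => h B (Multiset.mem_cons_of_mem hB))
    have h2 := (h A (Multiset.mem_cons_self _ _))
    simp only [Multiset.map_cons, Multiset.sum_cons, Multiset.card_cons]
    nlinarith

theorem aux_lists_wt_eq {n : ℕ} (l : Multiset (Multiset G)) (h : ∀ A ∈ l, auxWt A = n) :
    auxWt l.sum = n * Multiset.card l := by
  rw [auxWt_listsum]
  induction l using Multiset.induction_on with
  | empty => simp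
  | cons A l ih =>
    have h1 := ih (fun B hB => h B (Multiset.mem_cons_of_mem hB))
    have h2 := (h A (Multiset.mem_cons_self _ _))
    simp only [Multiset.map_cons, Multiset.sum_cons, Multiset.card_cons]
    rw [h1, h2]; ring

theorem aux_lists_wt_all {n : ℕ} (l : Multiset (Multiset G)) (h : ∀ A ∈ l, n ≤ auxWt A)
    (he : auxWt l.sum = n * Multiset.card l) : ∀ A ∈ l, auxWt A = n := by
  intro A hA
  obtain ⟨l', rfl⟩ := Multiset.exists_cons_of_mem hA
  have h1 := aux_lists_wt_ge l' (fun B hB => h B (Multiset.mem_cons_of_mem hB))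
  have h2 := h A hA
  rw [Multiset.sum_cons, auxWt_add, Multiset.card_cons] at he
  have : n * (Multiset.card l' + 1) = n * Multiset.card l' + n := by ring
  omega

/-- non-half-factorial sets have a non-unit atom -/
theorem aux_exists_nonunit [Finite G] {E : Set G} (hE : (DeltaSet E).Nonempty) :
    ∃ U, IsAtomSeq E U ∧ auxWt U ≠ AddMonoid.exponent G := by
  by_contra hcon
  push Not at hcon
  obtain ⟨d, B, hB, hB0, x, ⟨l1, c1, h1, s1⟩, y, ⟨l2, c2, h2, s2⟩, hxy, -⟩ := hE
  have e1 := aux_lists_wt_eq l1 (fun A hA => hcon A (h1 A hA))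
  have e2 := aux_lists_wt_eq l2 (fun A hA => hcon A (h2 A hA))
  rw [s1, c1] at e1
  rw [s2, c2, e1] at e2
  have := Nat.eq_of_mul_eq_mul_left aux_exp_pos e2
  omega

theorem aux_touch (Z : Multiset G) (l : Multiset (Multiset G)) (h : Z ≤ l.sum) :
    ∃ l', l' ≤ l ∧ Multiset.card l' ≤ Multiset.card Z ∧ Z ≤ l'.sum := by
  classical
  induction l using Multiset.induction_on generalizing Z with
  | empty => exact ⟨0, by simp, by simp, by simpa using h⟩
  | cons A l ih =>
    rw [Multiset.sum_cons] at h
    have h' : Z - A ≤ l.sum := by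
      rw [Multiset.sub_le_iff_le_add, add_comm]; exact h
    obtain ⟨l', a, b, c⟩ := ih (Z - A) h'
    by_cases hZ : Z - A = Z
    · rw [hZ] at b c
      exact ⟨l', a.trans (Multiset.le_cons_self _ _), b, c⟩
    · have hlt : Multiset.card (Z - A) < Multiset.card Z :=
        Multiset.card_lt_card (lt_of_le_of_ne (Multiset.sub_le_self _ _) hZ)
      refine ⟨A ::ₘ l', (Multiset.cons_le_cons_iff _).2 a, by rw [Multiset.card_cons]; omega, ?_⟩
      rw [Multiset.sum_cons, add_comm, ← Multiset.sub_le_iff_le_add]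
      exact c

/-- Main claim. -/
theorem aux_main [Finite G] {G₀ : Set G}
    (hd : AddMonoid.exponent G ≤ sInf (DeltaSet G₀) + 1) (l2 : Multiset (Multiset G)) :
    ∀ (l1 : Multiset (Multiset G)) (U : Multiset G), IsAtomSeq G₀ U →
    (∀ A ∈ l1, IsAtomSeq G₀ A ∧ auxWt A = AddMonoid.exponent G) →
    (∀ A ∈ l2, IsAtomSeq G₀ A ∧ auxWt A = AddMonoid.exponent G) →
    U + l2.sum = l1.sum → auxWt U = AddMonoid.exponent G := by
  induction l2 using Multiset.induction_on with
  | empty =>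
    intro l1 U hU h1 _ hs
    rw [Multiset.sum_zero, add_zero] at hs
    have hl : l1 ≠ 0 := by
      rintro rfl
      exact hU.2.1 (by simpa using hs)
    obtain ⟨A, hA⟩ := Multiset.exists_mem_of_ne_zero hl
    have hle : A ≤ U := by
      rw [hs]; exact Multiset.le_sum_of_mem hA
    have := aux_atom_eq hU (h1 A hA).1.1.2 (h1 A hA).1.2.1 hle
    rw [← this]; exact (h1 A hA).2
  | cons Z l2 ih =>
    intro l1 U hU h1 h2 hs
    have hZ := h2 Z (Multiset.mem_cons_self _ _)
    have hZle : Z ≤ l1.sum := by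
      rw [← hs, Multiset.sum_cons, add_left_comm]; exact Multiset.le_add_right _ _
    obtain ⟨la, hla, hcard, hZla⟩ := aux_touch Z l1 hZle
    obtain ⟨lb, rfl⟩ := Multiset.le_iff_exists_add.1 hla
    obtain ⟨B, hB⟩ := Multiset.le_iff_exists_add.1 hZla
    have hla1 : ∀ A ∈ la, IsAtomSeq G₀ A := fun A hA => (h1 A (Multiset.mem_add.2 (Or.inl hA))).1
    have hzs := aux_sum_zs la hla1
    have hBz : IsZeroSumSeq G₀ B := aux_zs_sub hZ.1.1 (hB ▸ hzs)
    obtain ⟨lc, hlc, hlcs⟩ := aux_factor _ B rfl hBz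
    have hlcn : ∀ A ∈ lc, AddMonoid.exponent G ≤ auxWt A := fun A hA => aux_lcn hd (hlc A hA)
    have hwt := aux_lists_wt_eq la (fun A hA => (h1 A (Multiset.mem_add.2 (Or.inl hA))).2)
    rw [hB, auxWt_add, hZ.2] at hwt
    have hge := aux_lists_wt_ge lc hlcn
    rw [hlcs] at hge
    have hcZ : Multiset.card Z ≤ AddMonoid.exponent G := hZ.2 ▸ auxWt_card_le Z
    have hpos := aux_exp_pos (G := G)
    have hle : Multiset.card lc + 1 ≤ Multiset.card la := by
      by_contra hcon
      have : Multiset.card la ≤ Multiset.card lc := by omega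
      have := Nat.mul_le_mul_left (AddMonoid.exponent G) this
      omega
    have heq : Multiset.card lc + 1 = Multiset.card la := by
      rcases Nat.eq_zero_or_pos (Multiset.card lc) with h0 | h0
      · have : lc = 0 := Multiset.card_eq_zero.1 h0
        rw [this, Multiset.sum_zero] at hlcs
        rw [← hlcs, auxWt_zero, add_zero] at hwt
        have := Nat.eq_of_mul_eq_mul_left hpos ((mul_one _).trans hwt)
        omega
      · by_contra hne
        have hlt : Multiset.card (Z ::ₘ lc) < Multiset.card la := by
          rw [Multiset.card_cons]; omega
        have := (aux_delta_le (l1 := Z ::ₘ lc) (l2 := la) (G₀ := G₀) (by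
          intro A hA
          rcases Multiset.mem_cons.1 hA with h | h
          · rw [h]; exact hZ.1
          · exact hlc A h) hla1 (by rw [Multiset.sum_cons, hlcs, hB]) hlt).2
        rw [Multiset.card_cons] at this
        omega
    have hall := aux_lists_wt_all lc hlcn (by
      rw [hlcs]
      rw [← heq] at hwt
      have : AddMonoid.exponent G * (Multiset.card lc + 1)
        = AddMonoid.exponent G * Multiset.card lc + AddMonoid.exponent G := by ring
      omega)
    refine ih (lc + lb) U hU ?_ (fun A hA => h2 A (Multiset.mem_cons_of_mem hA)) ?_
    · intro A hA
      rcases Multiset.mem_add.1 hA with h | h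
      · exact ⟨hlc A h, hall A h⟩
      · exact h1 A (Multiset.mem_add.2 (Or.inr h))
    · rw [Multiset.sum_cons, Multiset.sum_add, hB, add_left_comm, add_assoc] at hs
      rw [Multiset.sum_add, hlcs]
      exact add_left_cancel hs

/-- cardinality lower bound -/
theorem aux_card_ge [Finite G] {G₀ : Set G}
    (hd : AddMonoid.exponent G ≤ sInf (DeltaSet G₀) + 1) (hne : (DeltaSet G₀).Nonempty) :
    sInf (DeltaSet G₀) + 2 ≤ G₀.ncard := by
  classical
  obtain ⟨U, hU, hwU⟩ := aux_exists_nonunit hne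
  have hwU' : AddMonoid.exponent G < auxWt U := lt_of_le_of_ne (aux_lcn hd hU) (Ne.symm hwU)
  have hfin : G₀.Finite := Set.toFinite _
  set s := hfin.toFinset with hs
  have hcs : G₀.ncard = s.card := Set.ncard_eq_toFinset_card _ hfin
  set l1 : Multiset (Multiset G) := s.val.map (fun g => Multiset.replicate (addOrderOf g) g) with hl1
  have hl1a : ∀ A ∈ l1, IsAtomSeq G₀ A := by
    intro A hA
    obtain ⟨g, hg, rfl⟩ := Multiset.mem_map.1 hA
    exact aux_replicate_atom (hfin.mem_toFinset.1 hg)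
  have hl1w : ∀ A ∈ l1, auxWt A = AddMonoid.exponent G := by
    intro A hA
    obtain ⟨g, hg, rfl⟩ := Multiset.mem_map.1 hA
    exact auxWt_replicate g
  have hl1c : Multiset.card l1 = s.card := by simp [hl1]
  have hno : ∀ A ∈ l1, ¬ A ≤ U := by
    intro A hA hle
    have := aux_atom_eq hU (hl1a A hA).1.2 (hl1a A hA).2.1 hle
    exact hwU (this ▸ hl1w A hA)
  have hUle : U ≤ l1.sum := by
    rw [Multiset.le_iff_count]
    intro g
    by_cases hg : g ∈ U
    · have hgs : g ∈ s := hfin.mem_toFinset.2 (hU.1.1 g hg)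
      have hmem : Multiset.replicate (addOrderOf g) g ∈ l1 := Multiset.mem_map.2 ⟨g, hgs, rfl⟩
      have h1 : Multiset.count g (Multiset.replicate (addOrderOf g) g) ≤ Multiset.count g l1.sum :=
        Multiset.count_le_of_le _ (Multiset.le_sum_of_mem hmem)
      rw [Multiset.count_replicate_self] at h1
      refine le_trans ?_ h1
      by_contra hcon
      exact hno _ hmem (Multiset.le_count_iff_replicate_le.1 (by omega))
    · rw [Multiset.count_eq_zero_of_notMem hg]; exact Nat.zero_le _
  obtain ⟨B, hB⟩ := Multiset.le_iff_exists_add.1 hUle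
  have hBz : IsZeroSumSeq G₀ B := aux_zs_sub hU.1 (hB ▸ aux_sum_zs l1 hl1a)
  obtain ⟨lc, hlc, hlcs⟩ := aux_factor _ B rfl hBz
  have hge := aux_lists_wt_ge lc (fun A hA => aux_lcn hd (hlc A hA))
  have hwt := aux_lists_wt_eq l1 hl1w
  rw [hB, auxWt_add] at hwt
  rw [hlcs] at hge
  have hc1 : Multiset.card lc + 1 < Multiset.card l1 := by
    by_contra hcon
    have : Multiset.card l1 ≤ Multiset.card lc + 1 := by omega
    have := Nat.mul_le_mul_left (AddMonoid.exponent G) this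
    rw [mul_add, mul_one] at this
    omega
  have hc0 : Multiset.card lc ≠ 0 := by
    intro h0
    have : lc = 0 := Multiset.card_eq_zero.1 h0
    rw [this, Multiset.sum_zero] at hlcs
    rw [← hlcs, add_zero] at hB
    have hl1n : l1 ≠ 0 := by
      rintro h; rw [h] at hc1; simp at hc1
    obtain ⟨A, hA⟩ := Multiset.exists_mem_of_ne_zero hl1n
    exact hno A hA (hB ▸ Multiset.le_sum_of_mem hA)
  have := (aux_delta_le (l1 := U ::ₘ lc) (l2 := l1) (G₀ := G₀) (by
          intro A hA
          rcases Multiset.mem_cons.1 hA with h | h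
          · rw [h]; exact hU
          · exact hlc A h) hl1a (by rw [Multiset.sum_cons, hlcs, hB])
            (by rw [Multiset.card_cons]; omega)).2
  rw [Multiset.card_cons] at this
  omega

open scoped Classical in
/-- counting vector of a multiset -/
noncomputable def auxCnt (S : Multiset G) : G → ℤ := fun g => (Multiset.count g S : ℤ)

theorem auxCnt_add (S T : Multiset G) : auxCnt (S + T) = auxCnt S + auxCnt T := by
  funext g; simp [auxCnt]

theorem auxCnt_zero : auxCnt (0 : Multiset G) = 0 := by
  funext g; simp [auxCnt]

theorem auxCnt_inj {S T : Multiset G} (h : auxCnt S = auxCnt T) : S = T := by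
  classical
  ext g
  have := congrFun h g
  simp only [auxCnt] at this
  exact_mod_cast this

theorem auxCnt_sum [Fintype G] (S : Multiset G) : ∑ g, auxCnt S g • g = S.sum := by
  classical
  induction S using Multiset.induction_on with
  | empty => simp [auxCnt]
  | cons a S ih =>
    rw [← Multiset.singleton_add, auxCnt_add, Multiset.sum_add, ← ih]
    simp only [Pi.add_apply, add_smul, Finset.sum_add_distrib, Multiset.sum_singleton]
    congr 1
    rw [Finset.sum_eq_single a]
    · simp [auxCnt]
    · intro b _ hb
      simp [auxCnt, Multiset.count_singleton, hb]
    · simp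

/-- relation lattice -/
def auxK [Fintype G] (E : Set G) : AddSubgroup (G → ℤ) where
  carrier := {x | (∀ g, g ∉ E → x g = 0) ∧ ∑ g, x g • g = 0}
  zero_mem' := by simp
  add_mem' := by
    rintro x y ⟨h1, h2⟩ ⟨h3, h4⟩
    refine ⟨fun g hg => by simp [h1 g hg, h3 g hg], ?_⟩
    simp only [Pi.add_apply, add_smul, Finset.sum_add_distrib, h2, h4, add_zero]
  neg_mem' := by
    rintro x ⟨h1, h2⟩
    refine ⟨fun g hg => by simp [h1 g hg], ?_⟩
    simp only [Pi.neg_apply, neg_smul, Finset.sum_neg_distrib, h2, neg_zero]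

theorem aux_mem_auxK [Fintype G] {E : Set G} {x : G → ℤ} :
    x ∈ auxK E ↔ (∀ g, g ∉ E → x g = 0) ∧ ∑ g, x g • g = 0 := Iff.rfl

/-- group generated by unit atoms -/
def auxK1 (G₀ : Set G) : AddSubgroup (G → ℤ) :=
  AddSubgroup.closure (auxCnt '' {A | IsAtomSeq G₀ A ∧ auxWt A = AddMonoid.exponent G})

theorem auxCnt_mem_auxK [Fintype G] {E : Set G} {B : Multiset G} (hB : IsZeroSumSeq E B) :
    auxCnt B ∈ auxK E := by
  classical
  refine ⟨fun g hg => ?_, by rw [auxCnt_sum, hB.2]⟩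
  simp only [auxCnt, Nat.cast_eq_zero]
  exact Multiset.count_eq_zero_of_notMem (fun h => hg (hB.1 g h))

theorem aux_nonneg [Fintype G] {E : Set G} {x : G → ℤ} (hx : x ∈ auxK E) (h0 : ∀ g, 0 ≤ x g) :
    ∃ B, IsZeroSumSeq E B ∧ auxCnt B = x := by
  classical
  have key : auxCnt (∑ g, Multiset.replicate (x g).toNat g) = x := by
    funext g
    simp only [auxCnt]
    rw [Multiset.count_sum', Finset.sum_eq_single g]
    · simp [h0 g]
    · intro b _ hb
      simp [Multiset.count_replicate, hb]
    · simp
  refine ⟨∑ g, Multiset.replicate (x g).toNat g, ⟨?_, ?_⟩, key⟩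
  · intro g hg
    by_contra hgE
    have h1 := hx.1 g hgE
    rw [← key] at h1
    simp only [auxCnt, Nat.cast_eq_zero, Multiset.count_eq_zero] at h1
    exact h1 hg
  · rw [← auxCnt_sum, key]; exact hx.2

theorem aux_listsum_mem {G₀ : Set G} (l : Multiset (Multiset G))
    (h : ∀ A ∈ l, IsAtomSeq G₀ A ∧ auxWt A = AddMonoid.exponent G) :
    auxCnt l.sum ∈ auxK1 G₀ := by
  induction l using Multiset.induction_on with
  | empty => rw [Multiset.sum_zero, auxCnt_zero]; exact zero_mem _
  | cons A l ih =>
    rw [Multiset.sum_cons, auxCnt_add]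
    refine add_mem (AddSubgroup.subset_closure ⟨A, h A (Multiset.mem_cons_self _ _), rfl⟩)
      (ih (fun B hB => h B (Multiset.mem_cons_of_mem hB)))

theorem aux_hf_mem [Fintype G] {E G₀ : Set G} (hEG : E ⊆ G₀) (hE : DeltaSet E = ∅) :
    auxK E ≤ auxK1 G₀ := by
  classical
  have pos : ∀ x ∈ auxK E, (∀ g, 0 ≤ x g) → x ∈ auxK1 G₀ := by
    intro x hx h0
    obtain ⟨B, hB, rfl⟩ := aux_nonneg hx h0
    obtain ⟨l, hl, rfl⟩ := aux_factor _ B rfl hB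
    exact aux_listsum_mem l (fun A hA => ⟨aux_isAtom_sub hEG (hl A hA), aux_hf_unit hE (hl A hA)⟩)
  intro x hx
  set c : G → ℤ := fun g => |x g| * addOrderOf g with hc
  have hcK : c ∈ auxK E := by
    refine ⟨fun g hg => by simp [hc, hx.1 g hg], ?_⟩
    refine Finset.sum_eq_zero (fun g _ => ?_)
    simp only [hc]
    rw [mul_smul, natCast_zsmul, addOrderOf_nsmul_eq_zero, smul_zero]
  have h1 := pos c hcK (fun g => by positivity)
  have h2 := pos (x + c) (add_mem hx hcK) (fun g => by
    simp only [Pi.add_apply, hc]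
    have h3 : (1 : ℤ) ≤ addOrderOf g := by exact_mod_cast addOrderOf_pos g
    have h4 := neg_abs_le (x g)
    have h5 := abs_nonneg (x g)
    nlinarith)
  have := sub_mem h2 h1
  simpa using this

theorem aux_K1_repr {G₀ : Set G} {x : G → ℤ} (hx : x ∈ auxK1 G₀) :
    ∃ l1 l2 : Multiset (Multiset G),
    (∀ A ∈ l1, IsAtomSeq G₀ A ∧ auxWt A = AddMonoid.exponent G) ∧
    (∀ A ∈ l2, IsAtomSeq G₀ A ∧ auxWt A = AddMonoid.exponent G) ∧
    x + auxCnt l2.sum = auxCnt l1.sum := by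
  have hadd : ∀ l l' : Multiset (Multiset G),
    (∀ A ∈ l, IsAtomSeq G₀ A ∧ auxWt A = AddMonoid.exponent G) →
    (∀ A ∈ l', IsAtomSeq G₀ A ∧ auxWt A = AddMonoid.exponent G) →
    (∀ A ∈ l + l', IsAtomSeq G₀ A ∧ auxWt A = AddMonoid.exponent G) := by
    intro l l' h h' A hA
    rcases Multiset.mem_add.1 hA with hh | hh
    · exact h A hh
    · exact h' A hh
  unfold auxK1 at hx
  induction hx using AddSubgroup.closure_induction with
  | mem x hx =>
    obtain ⟨A, hA, rfl⟩ := hx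
    exact ⟨{A}, 0, by simpa using hA, by simp, by simp [auxCnt_zero]⟩
  | zero => exact ⟨0, 0, by simp, by simp, by simp⟩
  | add x y _ _ ihx ihy =>
    obtain ⟨a, b, ha, hb, e⟩ := ihx
    obtain ⟨a', b', ha', hb', e'⟩ := ihy
    refine ⟨a + a', b + b', hadd _ _ ha ha', hadd _ _ hb hb', ?_⟩
    rw [Multiset.sum_add, Multiset.sum_add, auxCnt_add, auxCnt_add, ← e, ← e']
    abel
  | neg x _ ihx =>
    obtain ⟨a, b, ha, hb, e⟩ := ihx
    refine ⟨b, a, hb, ha, ?_⟩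
    rw [← e]; abel

theorem aux_atom_not_mem [Finite G] {G₀ : Set G}
    (hd : AddMonoid.exponent G ≤ sInf (DeltaSet G₀) + 1) {U : Multiset G} (hU : IsAtomSeq G₀ U)
    (hw : auxWt U ≠ AddMonoid.exponent G) : auxCnt U ∉ auxK1 G₀ := by
  intro h
  obtain ⟨l1, l2, h1, h2, e⟩ := aux_K1_repr h
  rw [← auxCnt_add] at e
  exact hw (aux_main hd l2 l1 U hU h1 h2 (auxCnt_inj e))

theorem aux_closure_repr [Fintype G] {T : Set G} {h : G} (hh : h ∈ AddSubgroup.closure T) :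
    ∃ y : G → ℤ, (∀ g, g ∉ T → y g = 0) ∧ ∑ g, y g • g = h := by
  classical
  induction hh using AddSubgroup.closure_induction with
  | mem x hx =>
    refine ⟨Pi.single x 1, fun g hg => ?_, ?_⟩
    · rw [Pi.single_eq_of_ne]
      rintro rfl; exact hg hx
    · rw [Finset.sum_eq_single x]
      · simp
      · intro b _ hb; simp [Pi.single_eq_of_ne hb]
      · simp
  | zero => exact ⟨0, by simp, by simp⟩
  | add x y _ _ ihx ihy =>
    obtain ⟨a, h1, rfl⟩ := ihx
    obtain ⟨b, h2, rfl⟩ := ihy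
    exact ⟨a + b, fun g hg => by simp [h1 g hg, h2 g hg], by
      simp only [Pi.add_apply, add_smul, Finset.sum_add_distrib]⟩
  | neg x _ ihx =>
    obtain ⟨a, h1, rfl⟩ := ihx
    exact ⟨-a, fun g hg => by simp [h1 g hg], by
      simp only [Pi.neg_apply, neg_smul, Finset.sum_neg_distrib]⟩

theorem aux_third [Fintype G] {G₀ : Set G}
    (hK : ∀ h ∈ G₀, auxK (G₀ \ {h}) ≤ auxK1 G₀) {U : G → ℤ} (hU : U ∈ auxK G₀)
    (hU1 : U ∉ auxK1 G₀) {h h' : G} (hh : h ∈ G₀) (hh' : h' ∈ G₀ \ {h}) :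
    h ∉ AddSubgroup.closure (G₀ \ {h, h'}) := by
  classical
  intro hcl
  obtain ⟨y, hy, hys⟩ := aux_closure_repr hcl
  have hne : h ≠ h' := fun e => hh'.2 (by simp [e])
  set z : G → ℤ := Pi.single h 1 - y with hz
  have hzs : ∑ g, z g • g = 0 := by
    simp only [hz, Pi.sub_apply, sub_smul, Finset.sum_sub_distrib, hys]
    rw [Finset.sum_eq_single h]
    · simp
    · intro b _ hb; simp [Pi.single_eq_of_ne hb]
    · simp
  have hyh : y h = 0 := hy h (by simp)
  have hyh' : y h' = 0 := hy h' (by simp)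
  have hzK : z ∈ auxK (G₀ \ {h'}) := by
    refine ⟨fun g hg => ?_, hzs⟩
    by_cases hgh : g = h
    · subst hgh; exact absurd ⟨hh, by simpa using hne⟩ hg
    · simp only [hz, Pi.sub_apply, Pi.single_eq_of_ne hgh]
      rw [hy g]
      · simp
      · intro hg'
        apply hg
        refine ⟨hg'.1, fun e => hg'.2 ?_⟩
        rw [Set.mem_singleton_iff] at e
        simp [e]
  have hzh : z h = 1 := by simp [hz, hyh]
  have h1 := hK h' hh'.1 hzK
  have h2 : U - U h • z ∈ auxK (G₀ \ {h}) := by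
    have hzG : z ∈ auxK G₀ := ⟨fun g hg => hzK.1 g (fun hg' => hg hg'.1), hzs⟩
    have h3 := sub_mem hU (AddSubgroup.zsmul_mem _ hzG (U h))
    refine ⟨fun g hg => ?_, h3.2⟩
    by_cases hgh : g = h
    · subst hgh; simp [hzh]
    · exact h3.1 g (fun hg' => hg ⟨hg', by simpa using hgh⟩)
  apply hU1
  have := add_mem (hK h hh h2) (AddSubgroup.zsmul_mem _ h1 (U h))
  simpa using this

theorem aux_int_gen {A : Type*} [AddCommGroup A] (K : AddSubgroup A) (f : A →+ ℤ) :
    ∃ w ∈ K, ∀ x ∈ K, f w ∣ f x := by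
  obtain ⟨a, ha⟩ := Int.subgroup_cyclic (K.map f)
  rw [← AddSubgroup.zmultiples_eq_closure] at ha
  have h1 : a ∈ K.map f := by rw [ha]; exact AddSubgroup.mem_zmultiples a
  obtain ⟨w, hw, rfl⟩ := h1
  refine ⟨w, hw, fun x hx => ?_⟩
  have : f x ∈ K.map f := ⟨x, hx, rfl⟩
  rw [ha] at this
  exact Int.mem_zmultiples_iff.1 this

theorem aux_card_lemma {A V : Type*} [AddCommGroup A] [AddCommGroup V] [Finite V] [Finite G]
    (p : ℕ) (hV : ∀ v : V, p • v = 0) (Φ : A →+ G) (Θ : A →+ V) (hΘ : Function.Surjective Θ)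
    (hker : Φ.ker ≤ Θ.ker) : Nat.card V ≤ Nat.card {x : G // p • x = 0} := by
  classical
  have hsur := Φ.rangeRestrict_surjective
  let T : Φ.range →+ V := Φ.rangeRestrict.liftOfSurjective hsur ⟨Θ, by
    rw [AddMonoidHom.ker_rangeRestrict]; exact hker⟩
  have hT : ∀ a, T (Φ.rangeRestrict a) = Θ a := fun a =>
    AddMonoidHom.liftOfRightInverse_comp_apply _ _ _ _ a
  have hTs : Function.Surjective T := by
    intro v
    obtain ⟨a, rfl⟩ := hΘ v
    exact ⟨_, hT a⟩
  let m : Φ.range →+ Φ.range := nsmulAddMonoidHom p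
  have hle : m.range ≤ T.ker := by
    rintro _ ⟨x, rfl⟩
    rw [AddMonoidHom.mem_ker]
    simp [m, hV]
  have c1 := AddSubgroup.card_eq_card_quotient_mul_card_addSubgroup m.ker
  have c2 := AddSubgroup.card_eq_card_quotient_mul_card_addSubgroup T.ker
  rw [Nat.card_congr (QuotientAddGroup.quotientKerEquivRange m).toEquiv] at c1
  rw [Nat.card_congr (QuotientAddGroup.quotientKerEquivOfSurjective T hTs).toEquiv, c1] at c2
  have c3 : Nat.card m.range ≤ Nat.card T.ker := Nat.card_le_card_of_injective
    (AddSubgroup.inclusion hle) (AddSubgroup.inclusion_injective hle)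
  have c4 : Nat.card m.ker ≤ Nat.card {x : G // p • x = 0} := by
    refine Nat.card_le_card_of_injective (fun x => ⟨x.1.1, ?_⟩) ?_
    · have := x.2
      rw [AddMonoidHom.mem_ker] at this
      have := congrArg Subtype.val this
      simpa [m] using this
    · intro x y hxy
      have := congrArg Subtype.val hxy
      exact Subtype.ext (Subtype.ext this)
  have c5 : 0 < Nat.card T.ker := Nat.card_pos
  have c6 := Nat.mul_le_mul_right (Nat.card m.ker) c3
  rw [c2, mul_comm, ] at c6
  exact (Nat.le_of_mul_le_mul_left c6 c5).trans c4

theorem aux_pRank_le [Finite G] {p : ℕ} : pRank G p ≤ Nat.card G := by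
  unfold pRank
  exact (Nat.log_le_self _ _).trans
    (Nat.card_le_card_of_injective Subtype.val Subtype.val_injective)

theorem aux_rank_bdd [Finite G] : BddAbove {r : ℕ | ∃ p : ℕ, p.Prime ∧ r = pRank G p} := by
  refine ⟨Nat.card G, ?_⟩
  rintro r ⟨p, _, rfl⟩
  exact aux_pRank_le

theorem aux_rank_upper [Fintype G] {G₀ : Set G} (K1 : AddSubgroup (G → ℤ))
    (hK : ∀ h ∈ G₀, auxK (G₀ \ {h}) ≤ K1) {U : G → ℤ} (hU : U ∈ auxK G₀)
    (hU1 : U ∉ K1) : G₀.ncard ≤ rankG G + 1 := by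
  classical
  rcases G₀.eq_empty_or_nonempty with he | ⟨h0, hh0⟩
  · simp [he]
  -- generators of the coordinate images
  have hm : ∀ h : G₀, ∃ w ∈ auxK G₀, (∀ x ∈ auxK G₀, w h ∣ x h) ∧ w h ≠ 0 := by
    intro h
    obtain ⟨w, hw, hd⟩ := aux_int_gen (auxK G₀) (Pi.evalAddMonoidHom (fun _ : G => ℤ) h.1)
    refine ⟨w, hw, hd, fun h00 => ?_⟩
    have hx : (Pi.single h.1 (addOrderOf h.1 : ℤ) : G → ℤ) ∈ auxK G₀ := by
      refine ⟨fun g hg => ?_, ?_⟩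
      · rw [Pi.single_eq_of_ne]
        rintro rfl; exact hg h.2
      · rw [Finset.sum_eq_single h.1]
        · simp
        · intro b _ hb; simp [Pi.single_eq_of_ne hb]
        · simp
    have := hd _ hx
    simp only [Pi.evalAddMonoidHom_apply, h00, Pi.single_eq_same, zero_dvd_iff] at this
    have h2 := addOrderOf_pos h.1
    omega
  choose w hwK hwd hw0 using hm
  let o : G₀ := ⟨h0, hh0⟩
  -- reduction
  have hred : ∀ (h : G₀) (x : G → ℤ), x ∈ auxK G₀ → ∀ q : ℤ, x h = w h h * q →
      x - q • w h ∈ K1 ⊓ auxK G₀ := by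
    intro h x hx q hq
    have h3 := sub_mem hx (AddSubgroup.zsmul_mem _ (hwK h) q)
    refine ⟨hK h h.2 ⟨fun g hg => ?_, h3.2⟩, h3⟩
    by_cases hgh : g = h
    · subst hgh; simp [hq, mul_comm]
    · exact h3.1 g (fun hg' => hg ⟨hg', by simpa using hgh⟩)
  -- the prime
  obtain ⟨p, hp, hpd⟩ : ∃ p : ℕ, p.Prime ∧ ∀ x ∈ K1 ⊓ auxK G₀, w o o * p ∣ x o := by
    obtain ⟨b, hb, hbd⟩ := aux_int_gen (K1 ⊓ auxK G₀) (Pi.evalAddMonoidHom (fun _ : G => ℤ) o.1)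
    simp only [Pi.evalAddMonoidHom_apply] at hbd
    obtain ⟨t, ht⟩ := hwd o b hb.2
    have ht1 : t.natAbs ≠ 1 := by
      intro h1
      have htt : t * t = 1 := by
        rcases Int.natAbs_eq t with h | h <;> rw [h, h1] <;> norm_num
      obtain ⟨c, hc⟩ := hwd o U hU
      apply hU1
      have h2 := hred o b hb.2 t ht
      have h3 : w o ∈ K1 := by
        have h4 : b - (b - t • w o) ∈ K1 := AddSubgroup.sub_mem K1 hb.1 h2.1
        rw [sub_sub_cancel] at h4
        have h5 := AddSubgroup.zsmul_mem _ h4 t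
        rwa [smul_smul, htt, one_smul] at h5
      have h6 := add_mem (hred o U hU c hc).1 (AddSubgroup.zsmul_mem _ h3 c)
      simpa using h6
    obtain ⟨p, hp, hpt⟩ := Nat.exists_prime_and_dvd ht1
    refine ⟨p, hp, fun x hx => ?_⟩
    refine dvd_trans ?_ (hbd x hx)
    rw [ht]
    exact mul_dvd_mul_left _ (Int.natCast_dvd.2 hpt)
  have : Fact p.Prime := ⟨hp⟩
  -- β
  have hβ : ∀ h : G₀, ∃ β : ℤ, w h o = w o o * β := fun h => hwd o (w h) (hwK h)
  choose β hβ using hβ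
  have key : ∀ x ∈ auxK G₀, ∀ (h : G₀) (q0 q : ℤ), x o = w o o * q0 → x h = w h h * q →
      (p : ℤ) ∣ q0 - β h * q := by
    intro x hx h q0 q e0 e
    have h1 := hpd _ (hred h x hx q e)
    simp only [Pi.sub_apply, Pi.smul_apply, smul_eq_mul, hβ h, e0] at h1
    have : w o o * q0 - q * (w o o * β h) = w o o * (q0 - β h * q) := by ring
    rw [this] at h1
    exact Int.dvd_of_mul_dvd_mul_left (hw0 o) h1
  have hβ0 : ∀ h : G₀, (β h : ZMod p) ≠ 0 := by
    intro h hz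
    obtain ⟨q, hq⟩ := hwd h (w o) (hwK o)
    have h1 := key (w o) (hwK o) h 1 q (by ring) hq
    have h2 := (ZMod.intCast_zmod_eq_zero_iff_dvd _ _).2 h1
    push_cast at h2
    rw [hz] at h2
    simp at h2
  -- homs
  let Φ : (G₀ → ℤ) →+ G :=
    { toFun := fun z => ∑ h : G₀, (w h h * z h) • h.1
      map_zero' := by simp
      map_add' := by
        intro x y
        simp only [Pi.add_apply, mul_add, add_smul, Finset.sum_add_distrib] }
  let Θ : (G₀ → ℤ) →+ ({h : G₀ // h ≠ o} → ZMod p) :=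
    { toFun := fun z h => ((z o - β h.1 * z h.1 : ℤ) : ZMod p)
      map_zero' := by funext h; simp
      map_add' := by
        intro x y
        funext h
        simp only [Pi.add_apply]
        push_cast; ring }
  have hΘ : Function.Surjective Θ := by
    intro v
    refine ⟨fun h => if hh : h ≠ o then ((-((β h : ZMod p)⁻¹ * v ⟨h, hh⟩) : ZMod p).val : ℤ) else 0, ?_⟩
    funext h
    have := hβ0 h.1
    simp only [Θ, AddMonoidHom.coe_mk, ZeroHom.coe_mk]
    simp only [h.2, ne_eq, not_false_eq_true, dite_true, not_true_eq_false, dite_false]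
    push_cast
    rw [ZMod.natCast_val, ZMod.cast_id]
    field_simp
    ring
  have hker : Φ.ker ≤ Θ.ker := by
    intro z hz
    rw [AddMonoidHom.mem_ker] at hz ⊢
    let x : G → ℤ := fun g => if hg : g ∈ G₀ then w ⟨g, hg⟩ g * z ⟨g, hg⟩ else 0
    have hxh : ∀ h : G₀, x h = w h h * z h := by
      intro h; simp [x]
    have hx : x ∈ auxK G₀ := by
      refine ⟨fun g hg => by simp [x, hg], ?_⟩
      rw [← hz]
      simp only [Φ, AddMonoidHom.coe_mk, ZeroHom.coe_mk]
      have e1 : ∑ h : G₀, (w h h * z h) • h.1 = ∑ h : G₀, (fun g : G => x g • g) h.1 :=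
        Finset.sum_congr rfl (fun h _ => by simp only [hxh])
      refine Eq.trans ?_ (e1.trans (Finset.sum_set_coe (f := fun g : G => x g • g) G₀)).symm
      refine (Finset.sum_subset (Finset.subset_univ _) (fun g _ hg => ?_)).symm
      have : g ∉ G₀ := by simpa using hg
      simp [x, this]
    funext h
    have := key x hx h.1 (z o) (z h.1) (hxh o) (hxh h.1)
    exact (ZMod.intCast_zmod_eq_zero_iff_dvd _ _).2 this
  have hc := aux_card_lemma p (by intro v; funext h; simp) Φ Θ hΘ hker
  have hcV : Nat.card ({h : G₀ // h ≠ o} → ZMod p) = p ^ (G₀.ncard - 1) := by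
    rw [Nat.card_fun, Nat.card_zmod]
    congr 1
    rw [Nat.card_eq_fintype_card, Fintype.card_subtype_compl, Fintype.card_subtype_eq,
      ← Nat.card_eq_fintype_card]
    rfl
  rw [hcV] at hc
  have h1 : G₀.ncard - 1 ≤ pRank G p := by
    unfold pRank
    exact Nat.le_log_of_pow_le hp.one_lt hc
  have h2 : pRank G p ≤ rankG G := le_csSup aux_rank_bdd ⟨p, hp, rfl⟩
  omega

theorem aux_basis_mod {V : Type*} [AddCommGroup V] [Finite V] {p : ℕ} [Fact p.Prime]
    [Module (ZMod p) V] :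
    ∃ (k : ℕ) (e : Fin k → V), Nat.card V = p ^ k ∧
      ∀ c : Fin k → ℕ, ∑ i, c i • e i = 0 → ∀ i, p ∣ c i := by
  have hfin : Module.Finite (ZMod p) V := Module.Finite.of_finite
  let b := Module.finBasis (ZMod p) V
  refine ⟨Module.finrank (ZMod p) V, b, ?_, fun c hc i => ?_⟩
  · have h1 := Module.natCard_eq_pow_finrank (K := ZMod p) (V := V)
    rw [Nat.card_zmod] at h1
    exact h1
  · have h1 : ∑ i, (c i : ZMod p) • b i = 0 := by
      simp only [Nat.cast_smul_eq_nsmul]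
      exact hc
    have h2 := Fintype.linearIndependent_iff.1 b.linearIndependent _ h1 i
    exact (ZMod.natCast_eq_zero_iff _ _).1 h2

theorem aux_basis [Fintype G] {p : ℕ} (hp : p.Prime) :
    ∃ e : Fin (pRank G p) → G, (∀ i, p • e i = 0) ∧
      ∀ c : Fin (pRank G p) → ℕ, ∑ i, c i • e i = 0 → ∀ i, p ∣ c i := by
  classical
  have : Fact p.Prime := ⟨hp⟩
  let T : AddSubgroup G := (nsmulAddMonoidHom p : G →+ G).ker
  have hT : ∀ x : T, p • x = 0 := by
    intro x
    have := x.2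
    rw [AddMonoidHom.mem_ker] at this
    exact Subtype.ext (by simpa using this)
  obtain ⟨k, e, hk, he⟩ := @aux_basis_mod T _ _ p _ (AddCommGroup.zmodModule hT)
  have hr : pRank G p = k := by
    have : Nat.card {x : G // p • x = 0} = p ^ k := by
      rw [← hk]; rfl
    unfold pRank
    rw [this, Nat.log_pow hp.one_lt]
  rw [hr]
  refine ⟨fun i => (e i).1, fun i => ?_, fun c hc i => ?_⟩
  · have := congrArg Subtype.val (hT (e i))
    simpa using this
  · refine he c ?_ i
    apply Subtype.ext
    rw [AddSubgroup.val_finset_sum]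
    simpa using hc

theorem aux_lower [Fintype G] {p r : ℕ} (hp : p.Prime) (hr2 : 2 ≤ r) (e : Fin r → G)
    (hpe : ∀ i, p • e i = 0) (hind : ∀ c : Fin r → ℕ, ∑ i, c i • e i = 0 → ∀ i, p ∣ c i) :
    ∃ E : Set G, (DeltaSet E).Nonempty ∧ r - 1 ≤ sInf (DeltaSet E) := by
  classical
  have : Fact p.Prime := ⟨hp⟩
  have hp1 := hp.one_lt
  have hind' : ∀ i, e i ≠ 0 := by
    intro i hi
    have := hind (Pi.single i 1) (by
      rw [Finset.sum_eq_single i]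
      · simp [hi]
      · intro b _ hb; simp [Pi.single_eq_of_ne hb]
      · simp) i
    simp at this
    omega
  set e0 : G := ∑ i, e i with he0
  -- use integers mod p to see relations
  have hindZ : ∀ c : Fin r → ℤ, ∑ i, c i • e i = 0 → ∀ i, (p : ℤ) ∣ c i := by
    intro c hc i
    have h1 := hind (fun i => (c i % p).toNat) (by
      rw [← hc]
      refine Finset.sum_congr rfl (fun i _ => ?_)
      have hnn : 0 ≤ c i % p := Int.emod_nonneg _ (by omega)
      rw [← natCast_zsmul, Int.toNat_of_nonneg hnn]
      conv_rhs => rw [← Int.emod_add_mul_ediv (c i) p]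
      rw [add_smul, mul_comm, mul_smul, natCast_zsmul, hpe, smul_zero, add_zero]) i
    have hnn : 0 ≤ c i % p := Int.emod_nonneg _ (by omega)
    have h2 : (p : ℤ) ∣ c i % p := by
      rw [← Int.toNat_of_nonneg hnn]; exact_mod_cast h1
    have h3 := Int.emod_eq_zero_of_dvd h2
    rw [Int.emod_emod_of_dvd _ (dvd_refl _)] at h3
    exact Int.dvd_of_emod_eq_zero h3
  have hinj : Function.Injective e := by
    intro i j hij
    by_contra hne
    have := hindZ (Pi.single i 1 - Pi.single j 1) (by
      simp only [Pi.sub_apply, sub_smul, Finset.sum_sub_distrib]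
      rw [Finset.sum_eq_single i, Finset.sum_eq_single j]
      · simp [hij]
      · intro b _ hb; simp [Pi.single_eq_of_ne hb]
      · simp
      · intro b _ hb; simp [Pi.single_eq_of_ne hb]
      · simp) i
    simp [Pi.single_eq_of_ne hne] at this
    have := Int.le_of_dvd (by norm_num) this
    omega
  have hne0 : ∀ i, e i ≠ e0 := by
    intro i hi
    obtain ⟨j, hj⟩ : ∃ j : Fin r, j ≠ i := by
      have : Nontrivial (Fin r) := Fin.nontrivial_iff_two_le.2 hr2
      exact exists_ne i
    have := hindZ (1 - Pi.single i 1) (by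
      simp only [Pi.sub_apply, sub_smul, Finset.sum_sub_distrib]
      rw [Finset.sum_eq_single i (f := fun k => (Pi.single i 1 : Fin r → ℤ) k • e k)]
      · simp [← he0, hi]
      · intro b _ hb; simp [Pi.single_eq_of_ne hb]
      · simp) j
    simp [Pi.single_eq_of_ne hj] at this
    have := Int.le_of_dvd (by norm_num) this
    omega
  have hpe0 : p • e0 = 0 := by rw [he0, Finset.smul_sum]; simp [hpe]
  set E : Set G := insert e0 (Set.range e) with hE
  have hsum : ∀ S : Multiset G, (∀ x ∈ S, x ∈ E) →
      S.sum = ∑ i, (Multiset.count (e i) S + Multiset.count e0 S) • e i := by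
    intro S
    induction S using Multiset.induction_on with
    | empty => simp
    | cons a S ih =>
      intro h
      rw [Multiset.sum_cons, ih (fun x hx => h x (Multiset.mem_cons_of_mem hx))]
      rcases h a (Multiset.mem_cons_self _ _) with rfl | ⟨j, rfl⟩
      · conv_lhs => rw [he0, ← Finset.sum_add_distrib]
        refine Finset.sum_congr rfl (fun i _ => ?_)
        rw [Multiset.count_cons_of_ne (hne0 i), Multiset.count_cons_self, ← add_assoc, succ_nsmul,
          add_comm]
      · have : ∀ i, (Multiset.count (e i) (e j ::ₘ S) + Multiset.count e0 (e j ::ₘ S)) • e i =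
          (if i = j then e i else 0) + (Multiset.count (e i) S + Multiset.count e0 S) • e i := by
          intro i
          rw [Multiset.count_cons_of_ne (hne0 j).symm, Multiset.count_cons]
          by_cases hij : i = j
          · subst hij
            simp only [if_true]
            rw [add_right_comm, succ_nsmul, add_comm]
          · have : e i ≠ e j := fun h => hij (hinj h)
            simp [hij, this]
        simp only [this, Finset.sum_add_distrib]
        simp
  have hzs : ∀ S : Multiset G, IsZeroSumSeq E S → ∀ i, p ∣ Multiset.count (e i) S + Multiset.count e0 S := by
    intro S hS
    exact hind _ (by rw [← hsum S hS.1]; exact hS.2)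
  -- length functional times p
  let lam : Multiset G → ℕ := fun S => ∑ i, (Multiset.count (e i) S + Multiset.count e0 S)
  have hlam_add : ∀ S T, lam (S + T) = lam S + lam T := by
    intro S T
    simp only [lam, Multiset.count_add, ← Finset.sum_add_distrib]
    refine Finset.sum_congr rfl (fun i _ => by ring)
  have hEat : ∀ g ∈ E, ∀ U, IsAtomSeq E U → p ≤ Multiset.count g U → U = Multiset.replicate p g := by
    intro g hg U hU hc
    refine (aux_atom_eq hU ?_ ?_ (Multiset.le_count_iff_replicate_le.1 hc)).symm
    · rw [Multiset.sum_replicate]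
      rcases hg with rfl | ⟨i, rfl⟩
      · exact hpe0
      · exact hpe i
    · intro h
      have := congrArg Multiset.card h
      rw [Multiset.card_replicate, Multiset.card_zero] at this
      omega
  have hsupp : ∀ S : Multiset G, (∀ x ∈ S, x ∈ E) → S ≠ 0 →
      (∃ i, 0 < Multiset.count (e i) S) ∨ 0 < Multiset.count e0 S := by
    intro S hS h0
    obtain ⟨a, ha⟩ := Multiset.exists_mem_of_ne_zero h0
    rcases hS a ha with rfl | ⟨i, rfl⟩
    · exact Or.inr (Multiset.count_pos.2 ha)
    · exact Or.inl ⟨i, Multiset.count_pos.2 ha⟩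
  have hlam_atom : ∀ U, IsAtomSeq E U → lam U = p ∨ lam U = p * r := by
    intro U hU
    by_cases h0 : p ≤ Multiset.count e0 U
    · right
      rw [hEat e0 (Set.mem_insert _ _) U hU h0]
      have : ∀ i, Multiset.count (e i) (Multiset.replicate p e0) = 0 := fun i => by
        rw [Multiset.count_replicate, if_neg (hne0 i).symm]
      simp [lam, this, mul_comm]
    by_cases h1 : ∃ i, p ≤ Multiset.count (e i) U
    · left
      obtain ⟨i, hi⟩ := h1
      rw [hEat (e i) (Set.mem_insert_of_mem _ ⟨i, rfl⟩) U hU hi]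
      have : ∀ j, Multiset.count (e j) (Multiset.replicate p (e i)) = if i = j then p else 0 := by
        intro j
        rw [Multiset.count_replicate]
        simp [hinj.eq_iff]
      simp [lam, this, Multiset.count_replicate, hne0 i]
    · right
      push Not at h1
      have hd := hzs U hU.1
      have hpos : 0 < Multiset.count e0 U := by
        rcases hsupp U hU.1.1 hU.2.1 with ⟨i, hi⟩ | h
        · by_contra hcon
          have := Nat.le_of_dvd (by omega) (hd i)
          have := h1 i
          omega
        · exact h
      have : ∀ i, Multiset.count (e i) U + Multiset.count e0 U = p := by
        intro i
        obtain ⟨k, hk⟩ := hd i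
        have := h1 i
        have hk1 : k = 1 := by
          have a1 : 0 < k := by
            rcases Nat.eq_zero_or_pos k with h | h
            · subst h; omega
            · exact h
          have a2 : k < 2 := by
            by_contra hc
            have : p * 2 ≤ p * k := Nat.mul_le_mul_left p (by omega)
            omega
          omega
        rw [hk, hk1, mul_one]
      simp [lam, this, mul_comm]
  have hlam_list : ∀ l : Multiset (Multiset G), (∀ A ∈ l, IsAtomSeq E A) →
      ∃ t, lam l.sum = p * (Multiset.card l + (r - 1) * t) := by
    intro l
    induction l using Multiset.induction_on with
    | empty => intro _; exact ⟨0, by simp [lam]⟩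
    | cons A l ih =>
      intro h
      obtain ⟨t, ht⟩ := ih (fun B hB => h B (Multiset.mem_cons_of_mem hB))
      rw [Multiset.sum_cons, hlam_add, ht, Multiset.card_cons]
      obtain ⟨s, rfl⟩ : ∃ s, r = s + 1 := ⟨r - 1, by omega⟩
      rcases hlam_atom A (h A (Multiset.mem_cons_self _ _)) with h1 | h1
      · exact ⟨t, by rw [h1]; ring⟩
      · exact ⟨t + 1, by rw [h1]; simp only [Nat.add_sub_cancel]; ring⟩
  have hne : (DeltaSet E).Nonempty := by
    by_contra hcon
    rw [Set.not_nonempty_iff_eq_empty] at hcon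
    let W : Multiset G := e0 ::ₘ ∑ i, Multiset.replicate (p - 1) (e i)
    have hcW : ∀ i, Multiset.count (e i) W = p - 1 := by
      intro i
      simp only [W]
      rw [Multiset.count_cons_of_ne (hne0 i), Multiset.count_sum', Finset.sum_eq_single i]
      · simp
      · intro b _ hb
        rw [Multiset.count_replicate, if_neg (fun h => hb (hinj h))]
      · simp
    have hcW0 : Multiset.count e0 W = 1 := by
      simp only [W]
      rw [Multiset.count_cons_self, Multiset.count_sum', Finset.sum_eq_zero]
      intro i _
      rw [Multiset.count_replicate, if_neg (hne0 i)]
    have hWE : ∀ x ∈ W, x ∈ E := by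
      intro x hx
      rcases Multiset.mem_cons.1 hx with rfl | hx
      · exact Set.mem_insert _ _
      · obtain ⟨i, _, hi⟩ := Multiset.mem_sum.1 hx
        rw [Multiset.eq_of_mem_replicate hi]
        exact Set.mem_insert_of_mem _ ⟨i, rfl⟩
    have hWz : IsZeroSumSeq E W := by
      refine ⟨hWE, ?_⟩
      rw [hsum W hWE]
      refine Finset.sum_eq_zero (fun i _ => ?_)
      rw [hcW, hcW0, Nat.sub_add_cancel hp1.le, hpe]
    have hfull : ∀ A B : Multiset G, IsZeroSumSeq E A → IsZeroSumSeq E B → W = A + B →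
        0 < Multiset.count e0 A → B = 0 := by
      intro A B hA hB hW h0
      have cc : ∀ g, Multiset.count g W = Multiset.count g A + Multiset.count g B := by
        intro g; rw [hW, Multiset.count_add]
      by_contra hB0
      have c0 := cc e0
      rw [hcW0] at c0
      have hBi : ∀ i, Multiset.count (e i) B = 0 := by
        intro i
        have c1 := cc (e i)
        rw [hcW] at c1
        have := Nat.le_of_dvd (by omega) (hzs A hA i)
        omega
      rcases hsupp B hB.1 hB0 with ⟨i, hi⟩ | h
      · rw [hBi i] at hi; omega
      · omega
    have hWa : IsAtomSeq E W := by
      refine ⟨hWz, by simp [W], ?_⟩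
      intro A B hA hB hA0 hB0 hW
      have c0 : Multiset.count e0 W = Multiset.count e0 A + Multiset.count e0 B := by
        rw [hW, Multiset.count_add]
      rw [hcW0] at c0
      rcases Nat.eq_zero_or_pos (Multiset.count e0 A) with h | h
      · exact hA0 (hfull B A hB hA (by rw [hW, add_comm]) (by omega))
      · exact hB0 (hfull A B hA hB hW h)
    have hu := aux_hf_unit hcon hWa
    have hordi : ∀ i, addOrderOf (e i) = p := fun i => addOrderOf_eq_prime (hpe i) (hind' i)
    have hord0 : addOrderOf e0 = p := by
      refine addOrderOf_eq_prime hpe0 ?_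
      intro h0
      have := hind (fun _ => 1) (by simpa [← he0] using h0) ⟨0, by omega⟩
      have := Nat.le_of_dvd (by norm_num) this
      omega
    have hw : auxWt W = (1 + r * (p - 1)) * (AddMonoid.exponent G / p) := by
      have hall : ∀ x ∈ W, AddMonoid.exponent G / addOrderOf x = AddMonoid.exponent G / p := by
        intro x hx
        rcases hWE x hx with rfl | ⟨i, rfl⟩
        · rw [hord0]
        · rw [hordi]
      unfold auxWt
      rw [Multiset.map_congr rfl hall, Multiset.map_const', Multiset.sum_replicate]
      simp [W, add_comm]
    rw [hw] at hu
    have hpd : p ∣ AddMonoid.exponent G := hord0 ▸ AddMonoid.addOrder_dvd_exponent e0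
    obtain ⟨k, hk⟩ := hpd
    have hkpos : 0 < k := by
      have := aux_exp_pos (G := G)
      rw [hk] at this
      exact Nat.pos_of_mul_pos_left this
    rw [hk, Nat.mul_div_cancel_left _ hp.pos] at hu
    have h9 := Nat.eq_of_mul_eq_mul_right hkpos hu
    obtain ⟨q, rfl⟩ : ∃ q, p = q + 1 := ⟨p - 1, by omega⟩
    simp only [Nat.add_sub_cancel] at h9
    have : 2 * q ≤ r * q := Nat.mul_le_mul_right q hr2
    omega
  refine ⟨E, hne, ?_⟩
  obtain ⟨B, hB, hB0, x, ⟨l1, c1, h1, s1⟩, y, ⟨l2, c2, h2, s2⟩, hxy, hd, -⟩ := Nat.sInf_mem hne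
  obtain ⟨t1, ht1⟩ := hlam_list l1 h1
  obtain ⟨t2, ht2⟩ := hlam_list l2 h2
  rw [s1, c1] at ht1
  rw [s2, c2, ht1] at ht2
  have h3 := Nat.eq_of_mul_eq_mul_left hp.pos ht2
  rw [← hd]
  have h4 : t2 < t1 := by
    by_contra hc
    have := Nat.mul_le_mul_left (r - 1) (show t1 ≤ t2 by omega)
    omega
  have h5 : (r - 1) * (t2 + 1) ≤ (r - 1) * t1 := Nat.mul_le_mul_left _ h4
  rw [mul_add, mul_one] at h5
  omega

theorem aux_star_ge [Fintype G] (hr2 : 2 ≤ rankG G) : rankG G - 1 ≤ sSup (DeltaStar G) := by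
  have hmem : rankG G ∈ {r : ℕ | ∃ p : ℕ, p.Prime ∧ r = pRank G p} :=
    Nat.sSup_mem ⟨_, 2, Nat.prime_two, rfl⟩ aux_rank_bdd
  obtain ⟨p, hp, hrp⟩ := hmem
  obtain ⟨e, h1, h2⟩ := aux_basis (G := G) hp
  rw [hrp] at hr2
  obtain ⟨E, hE, hE2⟩ := aux_lower hp hr2 e h1 h2
  rw [hrp]
  refine hE2.trans (le_csSup ?_ ⟨E, hE, rfl⟩)
  refine Set.Finite.bddAbove (Set.Finite.subset (Set.finite_range (fun E : Set G => sInf (DeltaSet E))) ?_)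
  rintro d ⟨E, _, rfl⟩
  exact ⟨E, rfl⟩

theorem aux_rank_ge_two [Fintype G] (hr : AddMonoid.exponent G ≤ rankG G) : 2 ≤ rankG G := by
  by_contra hcon
  have hpos := aux_exp_pos (G := G)
  have h1 : AddMonoid.exponent G = 1 := by omega
  have hsub : Subsingleton G := AddMonoid.exp_eq_one_iff.1 h1
  have hmem : rankG G ∈ {r : ℕ | ∃ p : ℕ, p.Prime ∧ r = pRank G p} :=
    Nat.sSup_mem ⟨_, 2, Nat.prime_two, rfl⟩ aux_rank_bdd
  obtain ⟨p, hp, hrp⟩ := hmem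
  have : pRank G p = 0 := by
    unfold pRank
    have : Nat.card {x : G // p • x = 0} ≤ 1 := Finite.card_le_one_iff_subsingleton.2 inferInstance
    exact Nat.log_of_lt (lt_of_le_of_lt this hp.one_lt)
  omega

end Aux

/-- If `r(G) ≥ exp(G)` and `G₀` is a minimal non-half-factorial set with
`min Δ(G₀) = max Δ*(G)`, then `G₀` is an LCN-set, `|G₀| = r(G) + 1`, and
`h ∉ ⟨G₀ \ {h, h'}⟩` for all `h ∈ G₀` and `h' ∈ G₀ \ {h}`. -/
theorem stmt_18 {G : Type*} [AddCommGroup G] [Fintype G]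
    (hr : AddMonoid.exponent G ≤ rankG G) (G₀ : Set G)
    (hmin : IsMinNonHalfFactorial G₀)
    (hmax : sInf (DeltaSet G₀) = sSup (DeltaStar G)) :
    IsLCNSet G₀ ∧ G₀.ncard = rankG G + 1 ∧
    ∀ h ∈ G₀, ∀ h' ∈ G₀ \ {h}, h ∉ AddSubgroup.closure (G₀ \ {h, h'}) := by
  have hr2 := aux_rank_ge_two hr
  have hge := aux_star_ge (G := G) hr2
  rw [← hmax] at hge
  have hd : AddMonoid.exponent G ≤ sInf (DeltaSet G₀) + 1 := by omega
  have hcard := aux_card_ge hd hmin.1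
  obtain ⟨U, hU, hwU⟩ := aux_exists_nonunit hmin.1
  have hUK := auxCnt_mem_auxK hU.1
  have hUK1 := aux_atom_not_mem hd hU hwU
  have hK : ∀ h ∈ G₀, auxK (G₀ \ {h}) ≤ auxK1 G₀ := by
    intro h hh
    refine aux_hf_mem Set.sdiff_subset (hmin.2 _ ⟨Set.sdiff_subset, fun hsub => ?_⟩)
    exact (hsub hh).2 rfl
  have hup := aux_rank_upper (auxK1 G₀) hK hUK hUK1
  refine ⟨?_, by omega, ?_⟩
  · intro A hA
    have h1 := aux_lcn hd hA
    have h2 := auxWt_cross A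
    have h3 : (0 : ℚ) < AddMonoid.exponent G := by exact_mod_cast aux_exp_pos (G := G)
    have h4 : (AddMonoid.exponent G : ℚ) ≤ auxWt A := by exact_mod_cast h1
    rw [h2] at h4
    exact le_of_mul_le_mul_left (by rw [mul_one]; exact h4) h3
  · intro h hh h' hh'
    exact aux_third hK hUK hUK1 hh hh'
end
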